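/- arXiv:1207.4437 — 3 statements merged into one kernel-verified Lean document; each statement's English description precedes it below -/
import Mathlib

section
/- For every n ≥ 1 and every integer tuple (k_1,…,k_n) ∈ ℤ^n, the polynomial α satisfies α(n;k_1,…,k_n) = Σ_{A ∈ 𝒢_n(k_1,…,k_n)} (−1)^{sc(A)}, i.e. the evaluation of α at (k_1,…,k_n) equals the signed enumeration of Generalized Monotone Triangles with bottom row (k_1,…,k_n), where each triangle A is counted with sign (−1)^{sc(A)}. -/
/-- A triangular array of size `n`, encoded as a function `ℕ → ℕ → ℤ` whose
meaningful entries are `a i j` for `1 ≤ j ≤ i ≤ n` (row `i` has entries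
`a i 1, …, a i i`), normalized to be `0` outside this region. -/
def IsTri (n : ℕ) (a : ℕ → ℕ → ℤ) : Prop :=
  ∀ i j, ¬ (1 ≤ j ∧ j ≤ i ∧ i ≤ n) → a i j = 0

/-- A Monotone Triangle of size `n`: strict increase along rows and weak
increase along North-East and South-East diagonals. -/
def IsMT (n : ℕ) (a : ℕ → ℕ → ℤ) : Prop :=
  IsTri n a ∧
  (∀ i j, 1 ≤ j → j + 1 ≤ i → i ≤ n → a i j < a i (j + 1)) ∧
  (∀ i j, 1 ≤ j → j ≤ i → i + 1 ≤ n →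
    a (i + 1) j ≤ a i j ∧ a i j ≤ a (i + 1) (j + 1))

/-- A Generalized Monotone Triangle (GMT) of size `n`. -/
def IsGMT (n : ℕ) (a : ℕ → ℕ → ℤ) : Prop :=
  IsTri n a ∧
  -- (1) each entry is weakly bounded by its SW- and SE-neighbour
  (∀ i j, 1 ≤ j → j ≤ i → i + 1 ≤ n →
    min (a (i + 1) j) (a (i + 1) (j + 1)) ≤ a i j ∧
    a i j ≤ max (a (i + 1) j) (a (i + 1) (j + 1))) ∧
  -- (2) three weakly increasing consecutive entries force strict increase above
  (∀ i j, 1 ≤ j → j + 1 ≤ i → i + 1 ≤ n →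
    a (i + 1) j ≤ a (i + 1) (j + 1) → a (i + 1) (j + 1) ≤ a (i + 1) (j + 2) →
    a i j < a i (j + 1)) ∧
  -- (3) equality over a strict descent forces an equal neighbour
  (∀ i j, 1 ≤ j → j ≤ i → i + 1 ≤ n →
    (a i j = a (i + 1) j → a (i + 1) (j + 1) < a (i + 1) j →
      2 ≤ j ∧ a i (j - 1) = a i j) ∧
    (a (i + 1) (j + 1) < a (i + 1) j → a (i + 1) (j + 1) = a i j →
      j + 1 ≤ i ∧ a i (j + 1) = a i j))

/-- The bottom row of a triangular array of size `n` is `(k 0, …, k (n-1))`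
(1-indexed in the array). -/
def BottomRow (n : ℕ) (a : ℕ → ℕ → ℤ) (k : Fin n → ℤ) : Prop :=
  ∀ j : Fin n, a n (j.1 + 1) = k j

/-- The set of Monotone Triangles of size `n` with bottom row `k`. -/
def MTset (n : ℕ) (k : Fin n → ℤ) : Set (ℕ → ℕ → ℤ) :=
  {a | IsMT n a ∧ BottomRow n a k}

/-- The set `𝒢ₙ(k)` of Generalized Monotone Triangles of size `n` with bottom row `k`. -/
def GMTset (n : ℕ) (k : Fin n → ℤ) : Set (ℕ → ℕ → ℤ) :=
  {a | IsGMT n a ∧ BottomRow n a k}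

/-- The positions `(i, j)` of newcomers of a triangular array:
`a (i+1) j > a i j > a (i+1) (j+1)`. -/
def newcomersF (n : ℕ) (a : ℕ → ℕ → ℤ) : Finset (ℕ × ℕ) :=
  ((Finset.range (n + 1)) ×ˢ (Finset.range (n + 1))).filter (fun p =>
    1 ≤ p.2 ∧ p.2 ≤ p.1 ∧ p.1 + 1 ≤ n ∧
    a p.1 p.2 < a (p.1 + 1) p.2 ∧ a (p.1 + 1) (p.2 + 1) < a p.1 p.2)

/-- The positions `(i, j)` of sign-changing pairs `(a i j, a i (j+1))` of a
triangular array: two equal consecutive entries whose interlaced neighbour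
below is also equal to them. -/
def scPairsF (n : ℕ) (a : ℕ → ℕ → ℤ) : Finset (ℕ × ℕ) :=
  ((Finset.range (n + 1)) ×ˢ (Finset.range (n + 1))).filter (fun p =>
    1 ≤ p.2 ∧ p.2 + 1 ≤ p.1 ∧ p.1 + 1 ≤ n ∧
    a p.1 p.2 = a p.1 (p.2 + 1) ∧ a (p.1 + 1) (p.2 + 1) = a p.1 p.2)

/-- `sc(A)`: the total number of newcomers and sign-changing pairs of `A`. -/
def scT (n : ℕ) (a : ℕ → ℕ → ℤ) : ℕ :=
  (newcomersF n a).card + (scPairsF n a).card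

/-- `IsAlpha N f` asserts that `f` is the polynomial function
`α(N; k₁, …, k_N)`: it is given by a polynomial with rational coefficients of
degree at most `N - 1` in each variable, and its value at every strictly
increasing integer sequence equals the number of Monotone Triangles with that
bottom row. -/
def IsAlpha (N : ℕ) (f : (Fin N → ℤ) → ℚ) : Prop :=
  (∃ P : MvPolynomial (Fin N) ℚ, (∀ i : Fin N, P.degreeOf i ≤ N - 1) ∧
    ∀ k : Fin N → ℤ, f k = MvPolynomial.eval (fun i => (k i : ℚ)) P) ∧
  (∀ k : Fin N → ℤ, StrictMono k → f k = ((MTset N k).ncard : ℚ))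

/-! Removing the bottom row of a Generalized Monotone Triangle expresses the signed enumeration for
the row `k` as a sum over the rows above `k`, each weighted by the sign with which it may be placed
there. Except on rows with three equal consecutive entries, which are the bottom row of no triangle,
this sign is the coefficient of the row in Fischer's summation operator: both obey the same two-term
recursion in the length of the row. The summation operator maps polynomials to polynomials, because
power sums over intervals telescope through Bernoulli polynomials. Hence the signed enumeration is
polynomial in `k`. On strictly increasing rows the triangles are the Monotone Triangles and all
signs are `1`, so that it agrees with `α` there. This suffices: from any point, the line in
direction `(0, 1, …, n - 1)` eventually consists of strictly increasing tuples. -/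

theorem sum_Ico_add_one_sub {M : Type*} [AddCommGroup M] (F : ℤ → M) {a b : ℤ} (hab : a ≤ b) :
    ∑ l ∈ Finset.Ico a b, (F (l + 1) - F l) = F b - F a := by
  induction b, hab using Int.leInduction with
  | base => simp
  | succ b hab ih =>
    rw [← Finset.insert_Ico_right_eq_Ico_add_one hab, Finset.sum_insert (by simp), ih]
    abel

/-- The coefficient of `h l` in the extended sum `∑_{l=a}^{b} h l`, which for `b < a` stands for
`-∑_{b<l<a} h l`. -/
def signedIndicator (a b l : ℤ) : ℚ :=
  if a ≤ l ∧ l ≤ b then 1 else if b < l ∧ l < a then -1 else 0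

theorem sum_uIcc_signedIndicator_mul_sub (F : ℤ → ℚ) (a b : ℤ) :
    ∑ l ∈ Finset.uIcc a b, signedIndicator a b l * (F (l + 1) - F l) = F (b + 1) - F a := by
  rcases le_or_gt a b with hab | hba
  · rw [Finset.uIcc_of_le hab, ← Finset.Ico_add_one_right_eq_Icc,
      ← sum_Ico_add_one_sub F (by lia : a ≤ b + 1)]
    refine Finset.sum_congr rfl fun l hl => ?_
    rw [Finset.mem_Ico, Int.lt_add_one_iff] at hl
    rw [signedIndicator, if_pos hl, one_mul]
  · rw [Finset.uIcc_of_ge hba.le, ← neg_sub, ← sum_Ico_add_one_sub F (by lia : b + 1 ≤ a),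
      ← Finset.sum_neg_distrib]
    refine (Finset.sum_subset_zero_on_sdiff (fun l hl => ?_) (fun l hl => ?_) fun l hl => ?_).symm
    · simp only [Finset.mem_Ico, Finset.mem_Icc] at hl ⊢
      lia
    · simp only [Finset.mem_sdiff, Finset.mem_Ico, Finset.mem_Icc] at hl
      rw [signedIndicator, if_neg (by lia), if_neg (by lia), zero_mul]
    · rw [Finset.mem_Ico] at hl
      rw [signedIndicator, if_neg (by lia), if_pos (by lia), neg_one_mul]

theorem exists_polynomial_sum_signedIndicator_mul_pow (e : ℕ) :
    ∃ F : Polynomial ℚ, ∀ a b : ℤ,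
      ∑ l ∈ Finset.uIcc a b, signedIndicator a b l * (l : ℚ) ^ e =
        F.eval ((b : ℚ) + 1) - F.eval (a : ℚ) := by
  let F : Polynomial ℚ := Polynomial.C ((e + 1 : ℚ)⁻¹) * Polynomial.bernoulli (e + 1)
  have hF (l : ℤ) : F.eval ((l : ℚ) + 1) - F.eval (l : ℚ) = (l : ℚ) ^ e := by
    have he : (e + 1 : ℚ) ≠ 0 := by positivity
    simp only [F, Polynomial.eval_mul, Polynomial.eval_C, add_comm (l : ℚ) 1,
      Polynomial.bernoulli_eval_one_add, Nat.cast_add_one, Nat.add_sub_cancel]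
    field_simp
    ring
  refine ⟨F, fun a b => ?_⟩
  simpa only [Int.cast_add, Int.cast_one, hF] using
    sum_uIcc_signedIndicator_mul_sub (fun l => F.eval (l : ℚ)) a b

/-- The algebra of functions on integer points given by polynomials with rational coefficients. -/
def integerPolyFun (σ : Type*) : Subalgebra ℚ ((σ → ℤ) → ℚ) :=
  Algebra.adjoin ℚ (Set.range fun i k => (k i : ℚ))

section IntegerPolyFun

variable {σ τ : Type*}

theorem apply_mem_integerPolyFun (i : σ) : (fun k => (k i : ℚ)) ∈ integerPolyFun σ :=
  Algebra.subset_adjoin ⟨i, rfl⟩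

theorem mvPolynomial_eval_mem_integerPolyFun (P : MvPolynomial σ ℚ) :
    (fun k : σ → ℤ => MvPolynomial.eval (fun i => (k i : ℚ)) P) ∈ integerPolyFun σ := by
  induction P using MvPolynomial.induction_on with
  | C r =>
    simp only [MvPolynomial.eval_C]
    exact (integerPolyFun σ).algebraMap_mem r
  | add P Q hP hQ =>
    simp only [map_add]
    exact add_mem hP hQ
  | mul_X P i hP =>
    simp only [map_mul, MvPolynomial.eval_X]
    exact mul_mem hP (apply_mem_integerPolyFun i)

theorem polynomial_eval_mem_integerPolyFun (p : Polynomial ℚ) {F : (σ → ℤ) → ℚ}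
    (hF : F ∈ integerPolyFun σ) : (fun k => p.eval (F k)) ∈ integerPolyFun σ := by
  induction p using Polynomial.induction_on' with
  | add p q hp hq =>
    simp only [Polynomial.eval_add]
    exact add_mem hp hq
  | monomial n r =>
    simp only [Polynomial.eval_monomial]
    exact mul_mem ((integerPolyFun σ).algebraMap_mem r) (pow_mem hF n)

theorem comp_mem_integerPolyFun {F : (τ → ℤ) → ℚ} (hF : F ∈ integerPolyFun τ)
    {g : (σ → ℤ) → τ → ℤ} (hg : ∀ t, (fun k => (g k t : ℚ)) ∈ integerPolyFun σ) :
    (fun k => F (g k)) ∈ integerPolyFun σ := by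
  induction hF using Algebra.adjoin_induction with
  | mem F hF =>
    obtain ⟨t, rfl⟩ := hF
    exact hg t
  | algebraMap r => exact (integerPolyFun σ).algebraMap_mem r
  | add F G _ _ hF hG => exact add_mem hF hG
  | mul F G _ _ hF hG => exact mul_mem hF hG

theorem integerPolyFun_toSubmodule_eq_span [Fintype σ] :
    Subalgebra.toSubmodule (integerPolyFun σ) =
      Submodule.span ℚ (Set.range fun (e : σ → ℕ) k => ∏ i, (k i : ℚ) ^ e i) := by
  rw [integerPolyFun, Algebra.adjoin_eq_span]
  congr 1
  ext F
  rw [SetLike.mem_coe, Submonoid.mem_closure_range_iff_of_fintype]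
  refine exists_congr fun e => eq_comm.trans (Eq.congr ?_ rfl)
  ext k
  simp only [Finset.prod_apply, Pi.pow_apply]

theorem exists_polynomial_eval_line {F : (σ → ℤ) → ℚ} (hF : F ∈ integerPolyFun σ) (k v : σ → ℤ) :
    ∃ p : Polynomial ℚ, ∀ t : ℕ, F (fun i => k i + v i * t) = p.eval (t : ℚ) := by
  induction hF using Algebra.adjoin_induction with
  | mem F hF =>
    obtain ⟨i, rfl⟩ := hF
    exact ⟨Polynomial.C (k i : ℚ) + Polynomial.C (v i : ℚ) * Polynomial.X, fun t => by simp⟩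
  | algebraMap r => exact ⟨Polynomial.C r, fun t => by simp⟩
  | add F G _ _ hF hG =>
    obtain ⟨⟨p, hp⟩, q, hq⟩ := And.intro hF hG
    exact ⟨p + q, fun t => by simp [hp, hq]⟩
  | mul F G _ _ hF hG =>
    obtain ⟨⟨p, hp⟩, q, hq⟩ := And.intro hF hG
    exact ⟨p * q, fun t => by simp [hp, hq]⟩

theorem eq_of_frequently_eq_on_line {F G : (σ → ℤ) → ℚ} (hF : F ∈ integerPolyFun σ)
    (hG : G ∈ integerPolyFun σ) (k v : σ → ℤ)
    (h : ∃ᶠ t : ℕ in Filter.atTop, F (fun i => k i + v i * t) = G (fun i => k i + v i * t)) :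
    F k = G k := by
  obtain ⟨p, hp⟩ := exists_polynomial_eval_line hF k v
  obtain ⟨q, hq⟩ := exists_polynomial_eval_line hG k v
  have hpq : p = q := by
    refine p.eq_of_infinite_eval_eq q (Set.Infinite.mono ?_
      ((Nat.frequently_atTop_iff_infinite.1 h).image Nat.cast_injective.injOn))
    rintro _ ⟨t, ht, rfl⟩
    exact (hp t).symm.trans (ht.trans (hq t))
  have h0 : F (fun i => k i + v i * (0 : ℕ)) = G fun i => k i + v i * (0 : ℕ) := by
    rw [hp, hq, hpq]
  simpa only [Nat.cast_zero, mul_zero, add_zero] using h0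

theorem eventually_strictMono_add_mul {n : ℕ} (k : Fin n → ℤ) :
    ∀ᶠ t : ℕ in Filter.atTop, StrictMono fun i => k i + (i : ℤ) * t := by
  simp only [StrictMono, Filter.eventually_all]
  intro i j hij
  filter_upwards [Filter.eventually_gt_atTop (k i - k j).toNat] with t ht
  have hij' : (i : ℤ) + 1 ≤ j := by exact_mod_cast hij
  have ht' : k i - k j < t := by lia
  nlinarith

theorem eq_of_eq_on_strictMono {n : ℕ} {F G : (Fin n → ℤ) → ℚ} (hF : F ∈ integerPolyFun (Fin n))
    (hG : G ∈ integerPolyFun (Fin n)) (h : ∀ k, StrictMono k → F k = G k) : F = G :=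
  funext fun k => eq_of_frequently_eq_on_line hF hG k (fun i => i)
    ((eventually_strictMono_add_mul k).mono fun _ => h _).frequently

end IntegerPolyFun

section Rows

variable (X Y : ℕ → ℤ) (m j : ℕ)

/-- The entry `Y (j + 1)`, interlaced between `X (j + 1)` and `X (j + 2)` in the row below, is a
newcomer. Rows are indexed from `1`, and `j` counts from `0`. -/
def IsNewcomer : Prop := Y (j + 1) < X (j + 1) ∧ X (j + 2) < Y (j + 1)

/-- The entries `Y j` and `Y (j + 1)` of a row above the row `X` form a sign-changing pair; the
condition `0 < j` discards the index `0`, which lies outside the row. -/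
def IsSignChanging : Prop := 0 < j ∧ Y j = Y (j + 1) ∧ X (j + 1) = Y j

/-- The conditions on Generalized Monotone Triangles that involve `Y (j + 1)` and none of the
later entries of the row `Y`, where `X` is the row below `Y`. -/
def StepCond : Prop :=
  Y (j + 1) ∈ Finset.uIcc (X (j + 1)) (X (j + 2)) ∧
  (0 < j → X j ≤ X (j + 1) → X (j + 1) ≤ X (j + 2) → Y j < Y (j + 1)) ∧
  (0 < j → X (j + 1) < X j → X (j + 1) = Y j → Y (j + 1) = Y j) ∧
  (Y (j + 1) = X (j + 1) → X (j + 2) < X (j + 1) → 0 < j ∧ Y j = Y (j + 1))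

/-- The condition on Generalized Monotone Triangles at the right end of a row `Y` of length `m`
above the row `X`. -/
def RightEndCond : Prop := 0 < m → X (m + 1) < X m → X (m + 1) ≠ Y m

/-- The row `Y 1, …, Y m` may be placed above `X 1, …, X (m + 1)` in a Generalized Monotone
Triangle. -/
def IsGMTRow : Prop := (∀ j < m, StepCond X Y j) ∧ RightEndCond X Y m

instance : Decidable (IsNewcomer X Y j) := inferInstanceAs (Decidable (_ ∧ _))

instance : Decidable (IsSignChanging X Y j) := inferInstanceAs (Decidable (_ ∧ _))

instance : Decidable (StepCond X Y j) := inferInstanceAs (Decidable (_ ∧ _))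

instance : Decidable (RightEndCond X Y m) := inferInstanceAs (Decidable (_ → _))

instance : Decidable (IsGMTRow X Y m) := inferInstanceAs (Decidable (_ ∧ _))

/-- The contribution to `sc` of a row `Y` of length `m` above the row `X`. -/
def rowSc : ℕ :=
  ((Finset.range m).filter (IsNewcomer X Y)).card +
    ((Finset.range m).filter (IsSignChanging X Y)).card

/-- The sign with which the row `Y` of length `m` contributes above the row `X`, or `0` if it may
not be placed there. -/
def rowSign : ℚ := if IsGMTRow X Y m then (-1) ^ rowSc X Y m else 0

/-- The factor of `rowSign` that comes from the entry `Y (j + 1)`. -/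
def stepSign : ℚ :=
  if StepCond X Y j then
    (if IsNewcomer X Y j then -1 else 1) * (if IsSignChanging X Y j then -1 else 1)
  else 0

/-- The factor of `rowSign` that comes from the right end of the row `Y` of length `m`. -/
def rightEndIndicator : ℚ := if RightEndCond X Y m then 1 else 0

/-- Whether the pair `Y j`, `Y (j + 1)` is equal to its interlaced neighbour `X (j + 1)`. -/
def signChangingIndicator : ℚ := if IsSignChanging X Y j then 1 else 0

/-- The coefficient of `A (Y 1, …, Y m)` in Fischer's summation operator
`∑_{(l₁, …, l_m)}^{(X 1, …, X (m + 1))} A (l₁, …, l_m)`, in which the sums over adjacent intervals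
`[X j, X (j + 1)]`, `[X (j + 1), X (j + 2)]` are corrected by the terms with
`l_j = l_{j + 1} = X (j + 1)`. -/
def summationCoeff : ℕ → ℚ
  | 0 => 1
  | 1 => signedIndicator (X 1) (X 2) (Y 1)
  | m + 2 =>
    signedIndicator (X (m + 2)) (X (m + 3)) (Y (m + 2)) * summationCoeff (m + 1) -
      signChangingIndicator X Y (m + 1) * summationCoeff m

/-- The row `Y` of length `m` has three equal consecutive entries. -/
def HasTriple : Prop := ∃ j, 1 ≤ j ∧ j + 2 ≤ m ∧ Y j = Y (j + 1) ∧ Y (j + 1) = Y (j + 2)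

theorem rowSign_eq_prod :
    rowSign X Y m = (∏ j ∈ Finset.range m, stepSign X Y j) * rightEndIndicator X Y m := by
  simp only [stepSign, Finset.prod_ite_zero, Finset.prod_mul_distrib, Finset.prod_ite,
    Finset.prod_const, one_pow, mul_one, rightEndIndicator, ite_zero_mul_ite_zero, Finset.mem_range]
  rw [rowSign, rowSc, pow_add]
  rfl

theorem signChangingIndicator_succ :
    signChangingIndicator X Y (j + 1) =
      if Y (j + 1) = Y (j + 2) ∧ X (j + 2) = Y (j + 1) then 1 else 0 := by
  simp only [signChangingIndicator, IsSignChanging, Nat.succ_pos, true_and]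

variable {X Y m j}

theorem stepSign_mul_rightEndIndicator_succ
    (h : 0 < j → Y j ∈ Finset.uIcc (X j) (X (j + 1))) :
    stepSign X Y j * rightEndIndicator X Y (j + 1) =
      signedIndicator (X (j + 1)) (X (j + 2)) (Y (j + 1)) * rightEndIndicator X Y j -
        signChangingIndicator X Y j := by
  simp only [stepSign, rightEndIndicator, signedIndicator, signChangingIndicator, StepCond,
    IsNewcomer, IsSignChanging, RightEndCond, Finset.mem_uIcc] at *
  rcases lt_or_ge (X (j + 2)) (X (j + 1)) with hdescent | hascent
  · rcases eq_or_ne (Y (j + 1)) (X (j + 1)) with hleft | hleft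
    · -- `Y j = Y (j + 1)` is forced, and the sign `-1` of this pair is the correction term.
      grind
    · -- Newcomers carry the coefficient `-1`; `Y (j + 1) = X (j + 2)` must not end the row.
      grind
  · rcases lt_or_ge (X (j + 1)) (X j) with hprevDescent | hprevAscent
    · -- If `Y j = X (j + 1)`, the row cannot end at `Y j`, and `Y (j + 1) = Y j` is forced: only
      -- the correction term remains.
      grind
    · -- The correction term removes `Y j = Y (j + 1)`, where the row fails to increase strictly.
      grind

theorem stepSign_eq_rightEndIndicator
    (h : 0 < j → Y j ∈ Finset.uIcc (X j) (X (j + 1)))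
    (hsc : IsSignChanging X Y (j + 1))
    (ht : ¬ (0 < j ∧ Y j = Y (j + 1) ∧ Y (j + 1) = Y (j + 2))) :
    stepSign X Y j = rightEndIndicator X Y j := by
  simp only [stepSign, rightEndIndicator, StepCond,
    IsNewcomer, IsSignChanging, RightEndCond, Finset.mem_uIcc] at *
  -- `Y (j + 1) = X (j + 2)` is no newcomer, and if it may follow `Y j` in the row, then it forms no
  -- sign-changing pair with `Y j`, as three entries would be equal.
  grind

theorem HasTriple.mono {l : ℕ} (h : HasTriple Y l) (hlm : l ≤ m) : HasTriple Y m := by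
  obtain ⟨i, hi, hil, hY⟩ := h
  exact ⟨i, hi, hil.trans hlm, hY⟩

theorem mem_uIcc_of_prod_stepSign_ne_zero (h : ∏ j ∈ Finset.range m, stepSign X Y j ≠ 0)
    (hm : 0 < m) : Y m ∈ Finset.uIcc (X m) (X (m + 1)) := by
  obtain ⟨l, rfl⟩ := Nat.exists_eq_add_one_of_ne_zero hm.ne'
  have hl := Finset.prod_ne_zero_iff.1 h l (Finset.self_mem_range_succ l)
  exact (ite_ne_right_iff.1 hl).1.1

theorem rowSign_succ :
    rowSign X Y (m + 1) = signedIndicator (X (m + 1)) (X (m + 2)) (Y (m + 1)) * rowSign X Y m -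
      signChangingIndicator X Y m * ∏ j ∈ Finset.range m, stepSign X Y j := by
  rw [rowSign_eq_prod, rowSign_eq_prod, Finset.prod_range_succ]
  rcases eq_or_ne (∏ j ∈ Finset.range m, stepSign X Y j) 0 with h0 | h0
  · simp only [h0, zero_mul, mul_zero, sub_zero]
  · rw [mul_assoc, stepSign_mul_rightEndIndicator_succ (mem_uIcc_of_prod_stepSign_ne_zero h0)]
    ring

theorem signChangingIndicator_mul_prod_stepSign (h : ¬HasTriple Y (m + 2)) :
    signChangingIndicator X Y (m + 1) * ∏ j ∈ Finset.range (m + 1), stepSign X Y j =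
      signChangingIndicator X Y (m + 1) * rowSign X Y m := by
  by_cases hsc : IsSignChanging X Y (m + 1)
  · rw [rowSign_eq_prod, Finset.prod_range_succ]
    rcases eq_or_ne (∏ j ∈ Finset.range m, stepSign X Y j) 0 with h0 | h0
    · simp only [h0, zero_mul]
    · rw [stepSign_eq_rightEndIndicator (mem_uIcc_of_prod_stepSign_ne_zero h0) hsc
        fun ht => h ⟨m, ht.1, le_rfl, ht.2⟩]
  · rw [signChangingIndicator, if_neg hsc, zero_mul, zero_mul]

theorem rowSign_eq_summationCoeff (h : ¬HasTriple Y m) : rowSign X Y m = summationCoeff X Y m := by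
  induction m using Nat.twoStepInduction with
  | zero => simp [rowSign_eq_prod, rightEndIndicator, RightEndCond, summationCoeff]
  | one =>
    simp [rowSign_succ, rowSign_eq_prod, rightEndIndicator, RightEndCond, summationCoeff,
      signChangingIndicator, IsSignChanging]
  | more m ih₀ ih₁ =>
    rw [rowSign_succ, signChangingIndicator_mul_prod_stepSign h,
      ih₀ fun h' => h (h'.mono (by lia)), ih₁ fun h' => h (h'.mono (by lia)), summationCoeff]

end Rows

/-- The row with entries `k 0, …, k (n - 1)` at the indices `1, …, n`, extended by `0`. -/
noncomputable def rowOf (n : ℕ) (k : Fin n → ℤ) : ℕ → ℤ :=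
  Function.extend (fun i : Fin n => (i : ℕ) + 1) k fun _ => 0

section RowOf

variable {n j : ℕ} (k : Fin n → ℤ)

theorem rowOf_succ (i : Fin n) : rowOf n k (i + 1) = k i :=
  Function.Injective.extend_apply (f := fun i : Fin n => (i : ℕ) + 1)
    (fun _ _ h => Fin.ext (Nat.succ.inj h)) k _ i

theorem rowOf_eq_zero (hj : ¬(1 ≤ j ∧ j ≤ n)) : rowOf n k j = 0 :=
  Function.extend_apply' k _ j fun ⟨i, hi⟩ => hj (by lia)

theorem rowOf_snoc_of_le (l : ℤ) (hj : j ≤ n) : rowOf (n + 1) (Fin.snoc k l) j = rowOf n k j := by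
  rcases j with _ | j
  · rw [rowOf_eq_zero _ (by lia), rowOf_eq_zero _ (by lia)]
  · have h := rowOf_succ (Fin.snoc (α := fun _ => ℤ) k l) (Fin.castSucc ⟨j, hj⟩)
    rw [Fin.snoc_castSucc, ← rowOf_succ k] at h
    exact h

theorem rowOf_snoc_self (l : ℤ) : rowOf (n + 1) (Fin.snoc k l) (n + 1) = l :=
  (rowOf_succ _ (Fin.last n)).trans (Fin.snoc_last _ _)

theorem rowOf_mem_integerPolyFun (n j : ℕ) :
    (fun k => (rowOf n k j : ℚ)) ∈ integerPolyFun (Fin n) := by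
  by_cases hj : 1 ≤ j ∧ j ≤ n
  · obtain ⟨i, rfl⟩ : ∃ i : Fin n, j = i + 1 := ⟨⟨j - 1, by lia⟩, by simp; lia⟩
    simp only [rowOf_succ]
    exact apply_mem_integerPolyFun i
  · simp only [rowOf_eq_zero _ hj, Int.cast_zero]
    exact zero_mem _

end RowOf

theorem summationCoeff_congr (X : ℕ → ℤ) {Y Y' : ℕ → ℤ} {m : ℕ} (h : ∀ j ≤ m, Y j = Y' j) :
    summationCoeff X Y m = summationCoeff X Y' m := by
  induction m using Nat.twoStepInduction with
  | zero => rfl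
  | one => rw [summationCoeff, summationCoeff, h 1 le_rfl]
  | more m ih₀ ih₁ =>
    rw [summationCoeff, summationCoeff, ih₀ fun j hj => h j (by lia), ih₁ fun j hj => h j (by lia)]
    rw [signChangingIndicator_succ, signChangingIndicator_succ, h (m + 1) (by lia),
      h (m + 2) le_rfl]

/-- The rows `y` of length `m` whose entries lie weakly between their lower neighbours in the
row `X`. -/
def rowBox (m : ℕ) (X : ℕ → ℤ) : Finset (Fin m → ℤ) :=
  Fintype.piFinset fun i => Finset.uIcc (X (i + 1)) (X (i + 2))

/-- Fischer's summation operator `A ↦ ∑_{(l₁, …, l_m)}^{(X 1, …, X (m + 1))} A (l₁, …, l_m)`. -/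
noncomputable def summationOp (m : ℕ) (X : ℕ → ℤ) : ((Fin m → ℤ) → ℚ) →ₗ[ℚ] ℚ :=
  ∑ y ∈ rowBox m X, summationCoeff X (rowOf m y) m • LinearMap.proj y

section SummationOp

variable (m : ℕ) (X : ℕ → ℤ)

theorem summationOp_apply (A : (Fin m → ℤ) → ℚ) :
    summationOp m X A = ∑ y ∈ rowBox m X, summationCoeff X (rowOf m y) m * A y := by
  simp only [summationOp, LinearMap.sum_apply, LinearMap.smul_apply, LinearMap.proj_apply,
    smul_eq_mul]

theorem sum_rowBox_succ (F : (Fin (m + 1) → ℤ) → ℚ) :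
    ∑ y ∈ rowBox (m + 1) X, F y =
      ∑ l ∈ Finset.uIcc (X (m + 1)) (X (m + 2)), ∑ y ∈ rowBox m X, F (Fin.snoc y l) := by
  rw [← Finset.sum_product']
  refine Finset.sum_equiv (Fin.snocEquiv fun _ => ℤ).symm (fun y => ?_) fun y _ => ?_
  · simp only [rowBox, Fintype.mem_piFinset, Fin.forall_fin_succ', Finset.mem_product]
    exact and_comm
  · exact congrArg F ((Fin.snocEquiv fun _ => ℤ).apply_symm_apply y).symm

theorem summationCoeff_rowOf_snoc (y : Fin m → ℤ) (l : ℤ) :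
    summationCoeff X (rowOf (m + 1) (Fin.snoc y l)) m = summationCoeff X (rowOf m y) m :=
  summationCoeff_congr X fun _ => rowOf_snoc_of_le y l

theorem signChangingIndicator_rowOf_snoc_snoc (y : Fin m → ℤ) (l' l : ℤ) :
    signChangingIndicator X (rowOf (m + 2) (Fin.snoc (Fin.snoc y l') l)) (m + 1) =
      if l' = l ∧ X (m + 2) = l' then 1 else 0 := by
  rw [signChangingIndicator_succ, rowOf_snoc_self, rowOf_snoc_of_le _ _ le_rfl, rowOf_snoc_self]

theorem summationOp_zero (A : (Fin 0 → ℤ) → ℚ) : summationOp 0 X A = A ![] := by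
  simp [summationOp_apply, rowBox, summationCoeff, Subsingleton.elim _ ![]]

theorem summationOp_one (A : (Fin 1 → ℤ) → ℚ) :
    summationOp 1 X A =
      ∑ l ∈ Finset.uIcc (X 1) (X 2), signedIndicator (X 1) (X 2) l *
        summationOp 0 X fun y => A (Fin.snoc y l) := by
  simp only [summationOp_apply, sum_rowBox_succ, summationCoeff, rowOf_snoc_self, Finset.mul_sum,
    one_mul]

theorem sum_signChangingIndicator_mul (A : (Fin (m + 2) → ℤ) → ℚ) :
    ∑ l ∈ Finset.uIcc (X (m + 2)) (X (m + 3)), ∑ y ∈ rowBox (m + 1) X,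
      signChangingIndicator X (rowOf (m + 2) (Fin.snoc y l)) (m + 1) *
        summationCoeff X (rowOf (m + 1) y) m * A (Fin.snoc y l) =
      summationOp m X fun y => A (Fin.snoc (Fin.snoc y (X (m + 2))) (X (m + 2))) := by
  simp only [sum_rowBox_succ, signChangingIndicator_rowOf_snoc_snoc, summationCoeff_rowOf_snoc]
  rw [Finset.sum_eq_single_of_mem _ Finset.left_mem_uIcc,
    Finset.sum_eq_single_of_mem _ Finset.right_mem_uIcc, summationOp_apply]
  · simp only [and_self, if_true, one_mul]
  · intro l' _ hl'
    simp only [hl'.symm, and_false, if_false, zero_mul, Finset.sum_const_zero]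
  · intro l _ hl
    refine Finset.sum_eq_zero fun l' _ => Finset.sum_eq_zero fun y _ => ?_
    rw [if_neg (by rintro ⟨rfl, rfl⟩; exact hl rfl), zero_mul, zero_mul]

/-- This is the recursion by which Fischer defines the summation operator. -/
theorem summationOp_add_two (A : (Fin (m + 2) → ℤ) → ℚ) :
    summationOp (m + 2) X A =
      ∑ l ∈ Finset.uIcc (X (m + 2)) (X (m + 3)), signedIndicator (X (m + 2)) (X (m + 3)) l *
        summationOp (m + 1) X (fun y => A (Fin.snoc y l)) -
      summationOp m X fun y => A (Fin.snoc (Fin.snoc y (X (m + 2))) (X (m + 2))) := by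
  rw [← sum_signChangingIndicator_mul, summationOp_apply, sum_rowBox_succ,
    ← Finset.sum_sub_distrib]
  refine Finset.sum_congr rfl fun l _ => ?_
  rw [summationOp_apply, Finset.mul_sum, ← Finset.sum_sub_distrib]
  refine Finset.sum_congr rfl fun y _ => ?_
  have hy : summationCoeff X (rowOf (m + 2) (Fin.snoc y l)) m =
      summationCoeff X (rowOf (m + 1) y) m :=
    summationCoeff_congr X fun j hj => rowOf_snoc_of_le y l (hj.trans m.le_succ)
  rw [summationCoeff, rowOf_snoc_self, summationCoeff_rowOf_snoc, hy]
  ring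

theorem summationOp_const_mul (c : ℚ) (A : (Fin m → ℤ) → ℚ) :
    summationOp m X (fun y => c * A y) = c * summationOp m X A :=
  (summationOp m X).map_smul c A

end SummationOp

theorem sum_signedIndicator_mul_pow_mem_integerPolyFun {σ : Type*} (i j : σ) (e : ℕ) :
    (fun k : σ → ℤ => ∑ l ∈ Finset.uIcc (k i) (k j), signedIndicator (k i) (k j) l * (l : ℚ) ^ e) ∈
      integerPolyFun σ := by
  obtain ⟨F, hF⟩ := exists_polynomial_sum_signedIndicator_mul_pow e
  simp only [hF]
  exact sub_mem
    (polynomial_eval_mem_integerPolyFun F (add_mem (apply_mem_integerPolyFun j) (one_mem _)))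
    (polynomial_eval_mem_integerPolyFun F (apply_mem_integerPolyFun i))

theorem prod_snoc_pow {m : ℕ} (e : Fin (m + 1) → ℕ) (y : Fin m → ℤ) (l : ℤ) :
    ∏ i, ((Fin.snoc y l : Fin (m + 1) → ℤ) i : ℚ) ^ e i =
      (l : ℚ) ^ e (Fin.last m) * ∏ i, (y i : ℚ) ^ e (Fin.castSucc i) := by
  simp only [Fin.prod_univ_castSucc, Fin.snoc_castSucc, Fin.snoc_last, mul_comm]

theorem summationOp_prod_pow_mem_integerPolyFun (m : ℕ) (e : Fin m → ℕ) :
    (fun X => summationOp m X fun y => ∏ i, (y i : ℚ) ^ e i) ∈ integerPolyFun ℕ := by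
  induction m using Nat.twoStepInduction with
  | zero =>
    simp only [summationOp_zero]
    exact (integerPolyFun ℕ).algebraMap_mem _
  | one =>
    simp only [summationOp_one, prod_snoc_pow, summationOp_const_mul, ← mul_assoc,
      ← Finset.sum_mul, summationOp_zero]
    exact mul_mem (sum_signedIndicator_mul_pow_mem_integerPolyFun 1 2 _)
      ((integerPolyFun ℕ).algebraMap_mem _)
  | more m ih₀ ih₁ =>
    simp only [summationOp_add_two, prod_snoc_pow, summationOp_const_mul, ← mul_assoc,
      ← Finset.sum_mul]
    exact sub_mem
      (mul_mem (sum_signedIndicator_mul_pow_mem_integerPolyFun (m + 2) (m + 3) _) (ih₁ _))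
      (mul_mem (mul_mem (pow_mem (apply_mem_integerPolyFun _) _)
        (pow_mem (apply_mem_integerPolyFun _) _)) (ih₀ _))

theorem summationOp_mem_integerPolyFun {m : ℕ} {A : (Fin m → ℤ) → ℚ}
    (hA : A ∈ integerPolyFun (Fin m)) : (fun X => summationOp m X A) ∈ integerPolyFun ℕ := by
  rw [← Subalgebra.mem_toSubmodule, integerPolyFun_toSubmodule_eq_span] at hA
  induction hA using Submodule.span_induction with
  | mem A hA =>
    obtain ⟨e, rfl⟩ := hA
    exact summationOp_prod_pow_mem_integerPolyFun m e
  | zero =>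
    simp only [map_zero]
    exact zero_mem _
  | add A B _ _ hA hB =>
    simp only [map_add]
    exact add_mem hA hB
  | smul r A _ hA =>
    simp only [map_smul]
    exact (integerPolyFun ℕ).smul_mem hA r

theorem isGMTRow_iff {X Y : ℕ → ℤ} {m : ℕ} :
    IsGMTRow X Y m ↔
      (∀ j, 1 ≤ j → j ≤ m → min (X j) (X (j + 1)) ≤ Y j ∧ Y j ≤ max (X j) (X (j + 1))) ∧
      (∀ j, 1 ≤ j → j + 1 ≤ m → X j ≤ X (j + 1) → X (j + 1) ≤ X (j + 2) → Y j < Y (j + 1)) ∧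
      ∀ j, 1 ≤ j → j ≤ m →
        (Y j = X j → X (j + 1) < X j → 2 ≤ j ∧ Y (j - 1) = Y j) ∧
        (X (j + 1) < X j → X (j + 1) = Y j → j + 1 ≤ m ∧ Y (j + 1) = Y j) := by
  constructor
  · rintro ⟨hstep, hend⟩
    refine ⟨fun j hj hjm => ?_, fun j hj hjm => ?_, fun j hj hjm => ⟨?_, fun hX hXY => ?_⟩⟩
    · obtain ⟨j, rfl⟩ := Nat.exists_eq_add_of_le' hj
      exact Finset.mem_Icc.1 (hstep j hjm).1
    · exact (hstep j hjm).2.1 hj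
    · obtain ⟨j, rfl⟩ := Nat.exists_eq_add_of_le' hj
      intro hY hX
      obtain ⟨hj, hYj⟩ := (hstep j hjm).2.2.2 hY hX
      exact ⟨Nat.succ_le_succ hj, hYj⟩
    · have hjm' : j < m := hjm.lt_of_ne fun h => by subst h; exact hend hj hX hXY
      exact ⟨hjm', (hstep j hjm').2.2.1 hj hX hXY⟩
  · rintro ⟨hbetween, hstrict, hdescent⟩
    refine ⟨fun j hjm => ⟨Finset.mem_Icc.2 (hbetween (j + 1) (by lia) hjm),
      fun hj => hstrict j hj hjm, fun hj hX hXY => ((hdescent j hj hjm.le).2 hX hXY).2,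
      fun hY hX => ?_⟩, fun hm hX hXY => ?_⟩
    · obtain ⟨hj, hYj⟩ := (hdescent (j + 1) (by lia) hjm).1 hY hX
      exact ⟨by lia, hYj⟩
    · exact absurd ((hdescent m hm le_rfl).2 hX hXY).1 (by lia)

theorem isGMT_iff {n : ℕ} {a : ℕ → ℕ → ℤ} :
    IsGMT n a ↔ IsTri n a ∧ ∀ i < n, IsGMTRow (a (i + 1)) (a i) i := by
  simp only [isGMTRow_iff, IsGMT, Nat.succ_le_iff]
  grind

theorem card_newcomersF (n : ℕ) (a : ℕ → ℕ → ℤ) :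
    (newcomersF n a).card =
      ∑ i ∈ Finset.range n, ((Finset.range i).filter (IsNewcomer (a (i + 1)) (a i))).card := by
  rw [← Finset.card_sigma]
  refine Finset.card_nbij' (fun p => ⟨p.1, p.2 - 1⟩) (fun q => (q.1, q.2 + 1)) ?_ ?_ ?_
    fun _ _ => rfl
  · rintro ⟨i, j⟩ h
    simp only [newcomersF, SetLike.mem_coe, Finset.mem_filter] at h
    obtain ⟨-, hj, hji, hin, hnew⟩ := h
    obtain ⟨j, rfl⟩ := Nat.exists_eq_add_of_le' hj
    simpa only [SetLike.mem_coe, Finset.mem_sigma, Finset.mem_filter, Finset.mem_range] using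
      ⟨hin, hji, hnew⟩
  · rintro ⟨i, j⟩ h
    simp only [SetLike.mem_coe, Finset.mem_sigma, Finset.mem_filter, Finset.mem_range] at h
    simp only [newcomersF, SetLike.mem_coe, Finset.mem_filter, Finset.mem_product, Finset.mem_range]
    exact ⟨by lia, by lia, h.2.1, h.1, h.2.2⟩
  · rintro ⟨i, j⟩ h
    have hj : 1 ≤ j := (Finset.mem_filter.1 h).2.1
    simp only [Nat.sub_add_cancel hj]

theorem card_scPairsF (n : ℕ) (a : ℕ → ℕ → ℤ) :
    (scPairsF n a).card =
      ∑ i ∈ Finset.range n, ((Finset.range i).filter (IsSignChanging (a (i + 1)) (a i))).card := by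
  rw [← Finset.card_sigma]
  refine Finset.card_nbij' (fun p => ⟨p.1, p.2⟩) (fun q => (q.1, q.2)) ?_ ?_
    (fun _ _ => rfl) fun _ _ => rfl
  · rintro ⟨i, j⟩ h
    simp only [scPairsF, SetLike.mem_coe, Finset.mem_filter] at h
    obtain ⟨-, hj, hji, hin, hsc⟩ := h
    simpa only [SetLike.mem_coe, Finset.mem_sigma, Finset.mem_filter, Finset.mem_range] using
      ⟨hin, hji, hj, hsc⟩
  · rintro ⟨i, j⟩ h
    simp only [SetLike.mem_coe, Finset.mem_sigma, Finset.mem_filter, Finset.mem_range] at h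
    simp only [scPairsF, SetLike.mem_coe, Finset.mem_filter, Finset.mem_product, Finset.mem_range]
    exact ⟨by lia, h.2.2.1, h.2.1, h.1, h.2.2.2⟩

theorem scT_eq_sum_rowSc (n : ℕ) (a : ℕ → ℕ → ℤ) :
    scT n a = ∑ i ∈ Finset.range n, rowSc (a (i + 1)) (a i) i := by
  simp only [scT, card_newcomersF, card_scPairsF, rowSc, Finset.sum_add_distrib]

theorem IsTri.bottomRow_iff {n : ℕ} {a : ℕ → ℕ → ℤ} (ha : IsTri n a) {k : Fin n → ℤ} :
    BottomRow n a k ↔ a n = rowOf n k := by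
  refine ⟨fun h => funext fun j => ?_, fun h j => by rw [h, rowOf_succ]⟩
  by_cases hj : 1 ≤ j ∧ j ≤ n
  · obtain ⟨j, rfl⟩ := Nat.exists_eq_add_of_le' hj.1
    exact (h ⟨j, hj.2⟩).trans (rowOf_succ k _).symm
  · rw [rowOf_eq_zero k hj, ha n j (by lia)]

theorem mem_GMTset_iff {n : ℕ} {a : ℕ → ℕ → ℤ} {k : Fin n → ℤ} :
    a ∈ GMTset n k ↔
      IsTri n a ∧ a n = rowOf n k ∧ ∀ i < n, IsGMTRow (a (i + 1)) (a i) i := by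
  rw [GMTset, Set.mem_ofPred_eq, isGMT_iff]
  exact ⟨fun ⟨⟨ha, h⟩, hk⟩ => ⟨ha, ha.bottomRow_iff.1 hk, h⟩,
    fun ⟨ha, hk, h⟩ => ⟨⟨ha, h⟩, ha.bottomRow_iff.2 hk⟩⟩

theorem rowOf_injective (n : ℕ) : Function.Injective (rowOf n) := fun k l h =>
  funext fun i => by rw [← rowOf_succ k, h, rowOf_succ]

/-- The triangular array `a` of size `n` with the row `X` appended at the bottom. -/
def appendRow (n : ℕ) (X : ℕ → ℤ) (a : ℕ → ℕ → ℤ) : ℕ → ℕ → ℤ := Function.update a (n + 1) X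

section AppendRow

variable {n i : ℕ} (X : ℕ → ℤ) (a : ℕ → ℕ → ℤ)

theorem appendRow_self : appendRow n X a (n + 1) = X := Function.update_self ..

theorem appendRow_of_ne (hi : i ≠ n + 1) : appendRow n X a i = a i := Function.update_of_ne hi ..

theorem forall_isGMTRow_appendRow_iff :
    (∀ i < n + 1, IsGMTRow (appendRow n X a (i + 1)) (appendRow n X a i) i) ↔
      (∀ i < n, IsGMTRow (a (i + 1)) (a i) i) ∧ IsGMTRow X (a n) n := by
  rw [Nat.forall_lt_succ_right, appendRow_self, appendRow_of_ne X a n.lt_succ_self.ne]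
  refine and_congr_left' (forall₂_congr fun i hi => ?_)
  rw [appendRow_of_ne X a (by lia), appendRow_of_ne X a (by lia)]

theorem scT_appendRow : scT (n + 1) (appendRow n X a) = scT n a + rowSc X (a n) n := by
  rw [scT_eq_sum_rowSc, scT_eq_sum_rowSc, Finset.sum_range_succ, appendRow_self,
    appendRow_of_ne X a n.lt_succ_self.ne]
  refine congrArg (· + _) (Finset.sum_congr rfl fun i hi => ?_)
  rw [Finset.mem_range] at hi
  rw [appendRow_of_ne X a (by lia), appendRow_of_ne X a (by lia)]

variable {X a}

theorem IsTri.appendRow_rowOf (ha : IsTri n a) (k : Fin (n + 1) → ℤ) :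
    IsTri (n + 1) (appendRow n (rowOf (n + 1) k) a) := by
  intro i j hij
  rcases eq_or_ne i (n + 1) with rfl | hi
  · rw [appendRow_self, rowOf_eq_zero k (by lia)]
  · rw [appendRow_of_ne _ _ hi, ha i j (by lia)]

theorem IsTri.appendRow_zero (ha : IsTri (n + 1) a) : IsTri n (appendRow n 0 a) := by
  intro i j hij
  rcases eq_or_ne i (n + 1) with rfl | hi
  · rw [appendRow_self, Pi.zero_apply]
  · rw [appendRow_of_ne _ _ hi, ha i j (by lia)]

theorem injOn_appendRow (n : ℕ) (X : ℕ → ℤ) : Set.InjOn (appendRow n X) {a | IsTri n a} := by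
  intro a ha b hb hab
  ext i j
  rcases eq_or_ne i (n + 1) with rfl | hi
  · rw [ha _ _ (by lia), hb _ _ (by lia)]
  · rw [← appendRow_of_ne X a hi, hab, appendRow_of_ne X b hi]

end AppendRow

theorem IsGMTRow.mem_rowBox {X : ℕ → ℤ} {m : ℕ} {y : Fin m → ℤ} (h : IsGMTRow X (rowOf m y) m) :
    y ∈ rowBox m X :=
  Fintype.mem_piFinset.2 fun i => rowOf_succ y i ▸ (h.1 i i.2).1

theorem GMTset_zero (k : Fin 0 → ℤ) : GMTset 0 k = {0} := by
  ext a
  rw [mem_GMTset_iff, Set.mem_singleton_iff]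
  constructor
  · rintro ⟨ha, -⟩
    ext i j
    exact ha i j (by lia)
  · rintro rfl
    exact ⟨fun _ _ _ => rfl, funext fun j => (rowOf_eq_zero k (by lia)).symm, by simp⟩

theorem GMTset_succ (n : ℕ) (k : Fin (n + 1) → ℤ) :
    GMTset (n + 1) k =
      ⋃ y ∈ ((rowBox n (rowOf (n + 1) k)).filter fun y =>
          IsGMTRow (rowOf (n + 1) k) (rowOf n y) n : Set (Fin n → ℤ)),
        appendRow n (rowOf (n + 1) k) '' GMTset n y := by
  ext b
  simp only [Set.mem_iUnion, Set.mem_image, exists_prop, SetLike.mem_coe, Finset.mem_filter]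
  constructor
  · intro hb
    obtain ⟨htri, hbot, hrows⟩ := mem_GMTset_iff.1 hb
    have hb_eq : appendRow n (rowOf (n + 1) k) (appendRow n 0 b) = b := by
      rw [appendRow, appendRow, Function.update_idem, ← hbot, Function.update_eq_self]
    rw [← hb_eq, forall_isGMTRow_appendRow_iff] at hrows
    have hy := htri.appendRow_zero.bottomRow_iff.1 fun _ => rfl
    have hrow := hy ▸ hrows.2
    exact ⟨_, ⟨hrow.mem_rowBox, hrow⟩, _,
      mem_GMTset_iff.2 ⟨htri.appendRow_zero, hy, hrows.1⟩, hb_eq⟩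
  · rintro ⟨y, ⟨-, hrow⟩, a, ha, rfl⟩
    obtain ⟨htri, hbot, hrows⟩ := mem_GMTset_iff.1 ha
    exact mem_GMTset_iff.2 ⟨htri.appendRow_rowOf k, appendRow_self ..,
      (forall_isGMTRow_appendRow_iff ..).2 ⟨hrows, hbot ▸ hrow⟩⟩

theorem finite_GMTset (n : ℕ) (k : Fin n → ℤ) : (GMTset n k).Finite := by
  induction n with
  | zero =>
    rw [GMTset_zero]
    exact Set.finite_singleton 0
  | succ n ih =>
    rw [GMTset_succ]
    exact (Finset.finite_toSet _).biUnion fun y _ => (ih y).image _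

theorem pairwiseDisjoint_appendRow_image_GMTset (n : ℕ) (X : ℕ → ℤ) (s : Set (Fin n → ℤ)) :
    s.PairwiseDisjoint fun y => appendRow n X '' GMTset n y := by
  intro y _ z _ hyz
  rw [Function.onFun, Set.disjoint_left]
  rintro _ ⟨a, ha, rfl⟩ ⟨b, hb, hab⟩
  have ha' := mem_GMTset_iff.1 ha
  have hb' := mem_GMTset_iff.1 hb
  obtain rfl := injOn_appendRow n X hb'.1 ha'.1 hab
  exact hyz (rowOf_injective n (ha'.2.1.symm.trans hb'.2.1))

/-- The signed enumeration of Generalized Monotone Triangles with bottom row `k`. -/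
noncomputable def signedGMT (n : ℕ) (k : Fin n → ℤ) : ℚ := ∑ᶠ a ∈ GMTset n k, (-1) ^ scT n a

theorem signedGMT_succ_eq_sum_rowSign (n : ℕ) (k : Fin (n + 1) → ℤ) :
    signedGMT (n + 1) k =
      ∑ y ∈ rowBox n (rowOf (n + 1) k),
        rowSign (rowOf (n + 1) k) (rowOf n y) n * signedGMT n y := by
  simp only [rowSign, ite_mul, zero_mul]
  rw [signedGMT, GMTset_succ, finsum_mem_biUnion (pairwiseDisjoint_appendRow_image_GMTset n _ _)
    (Finset.finite_toSet _) fun y _ => (finite_GMTset n y).image _,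
    finsum_mem_coe_finset, Finset.sum_filter]
  refine Finset.sum_congr rfl fun y _ => if_congr Iff.rfl ?_ rfl
  rw [finsum_mem_image ((injOn_appendRow n _).mono fun a ha => ha.1.1), signedGMT,
    mul_finsum_mem]
  refine finsum_mem_congr rfl fun a ha => ?_
  rw [scT_appendRow, (mem_GMTset_iff.1 ha).2.1, pow_add, mul_comm]

theorem IsGMTRow.not_hasTriple {X Y : ℕ → ℤ} {m : ℕ} (h : IsGMTRow X Y m) :
    ¬HasTriple X (m + 1) := by
  rintro ⟨j, hj, hjm, hX, hX'⟩
  obtain ⟨j, rfl⟩ := Nat.exists_eq_add_of_le' hj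
  have hY : Y (j + 1) = X (j + 2) := by simpa [← hX, hX'] using (h.1 j (by lia)).1
  have hY' : Y (j + 2) = X (j + 2) := by simpa [← hX'] using (h.1 (j + 1) (by lia)).1
  have hlt := (h.1 (j + 1) (by lia)).2.1 (by lia) hX.le hX'.le
  exact hlt.ne (hY.trans hY'.symm)

theorem signedGMT_eq_zero_of_hasTriple {n : ℕ} {k : Fin n → ℤ} (h : HasTriple (rowOf n k) n) :
    signedGMT n k = 0 := by
  suffices hempty : GMTset n k = ∅ by rw [signedGMT, hempty, finsum_mem_empty]
  refine Set.eq_empty_of_forall_notMem fun a ha => ?_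
  obtain ⟨-, hbot, hrows⟩ := mem_GMTset_iff.1 ha
  obtain ⟨n, rfl⟩ : ∃ m, n = m + 1 := Nat.exists_eq_add_one.2 (by obtain ⟨j, -, hj, -⟩ := h; lia)
  exact (hbot ▸ hrows n n.lt_succ_self).not_hasTriple h

theorem signedGMT_succ (n : ℕ) (k : Fin (n + 1) → ℤ) :
    signedGMT (n + 1) k = summationOp n (rowOf (n + 1) k) (signedGMT n) := by
  rw [signedGMT_succ_eq_sum_rowSign, summationOp_apply]
  refine Finset.sum_congr rfl fun y _ => ?_
  by_cases hy : HasTriple (rowOf n y) n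
  · rw [signedGMT_eq_zero_of_hasTriple hy, mul_zero, mul_zero]
  · rw [rowSign_eq_summationCoeff hy]

theorem signedGMT_mem_integerPolyFun (n : ℕ) : signedGMT n ∈ integerPolyFun (Fin n) := by
  induction n with
  | zero =>
    convert (integerPolyFun (Fin 0)).algebraMap_mem (signedGMT 0 ![]) using 1
    exact funext fun k => congrArg _ (Subsingleton.elim k ![])
  | succ n ih =>
    rw [funext (signedGMT_succ n)]
    exact comp_mem_integerPolyFun (summationOp_mem_integerPolyFun ih)
      (rowOf_mem_integerPolyFun (n + 1))

theorem IsGMTRow.lt_succ {X Y : ℕ → ℤ} {m j : ℕ} (h : IsGMTRow X Y m)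
    (hX : ∀ j, 1 ≤ j → j < m + 1 → X j < X (j + 1)) (hj : 1 ≤ j) (hjm : j < m) :
    Y j < Y (j + 1) :=
  (h.1 j hjm).2.1 hj (hX j hj (by lia)).le (hX (j + 1) (by lia) (by lia)).le

theorem lt_succ_of_mem_GMTset {n i j : ℕ} {a : ℕ → ℕ → ℤ} {k : Fin n → ℤ} (hk : StrictMono k)
    (ha : a ∈ GMTset n k) (hin : i ≤ n) (hj : 1 ≤ j) (hji : j < i) : a i j < a i (j + 1) := by
  obtain ⟨-, hbot, hrows⟩ := mem_GMTset_iff.1 ha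
  induction hin using Nat.decreasingInduction generalizing j with
  | self =>
    obtain ⟨j, rfl⟩ := Nat.exists_eq_add_of_le' hj
    have := hk (Fin.mk_lt_mk.2 j.lt_succ_self : (⟨j, by lia⟩ : Fin n) < ⟨j + 1, hji⟩)
    rwa [← rowOf_succ k, ← rowOf_succ k, ← hbot] at this
  | of_succ i hi ih => exact (hrows i hi).lt_succ (fun _ => ih) hj hji

theorem isMT_of_mem_GMTset {n : ℕ} {a : ℕ → ℕ → ℤ} {k : Fin n → ℤ} (hk : StrictMono k)
    (ha : a ∈ GMTset n k) : IsMT n a := by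
  refine ⟨ha.1.1, fun i j hj hji hi => lt_succ_of_mem_GMTset hk ha hi hj hji,
    fun i j hj hji hi => ?_⟩
  have hlt := lt_succ_of_mem_GMTset hk ha hi hj (Nat.lt_succ_of_le hji)
  simpa only [min_eq_left hlt.le, max_eq_right hlt.le] using ha.1.2.1 i j hj hji hi

theorem IsMT.isGMT {n : ℕ} {a : ℕ → ℕ → ℤ} (ha : IsMT n a) : IsGMT n a := by
  obtain ⟨htri, hrow, hdiag⟩ := ha
  refine ⟨htri, fun i j hj hji hi => ?_, fun i j hj hji hi _ _ => hrow i j hj hji (by lia),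
    fun i j hj hji hi => ?_⟩
  · exact ⟨min_le_of_left_le (hdiag i j hj hji hi).1, le_max_of_le_right (hdiag i j hj hji hi).2⟩
  · have hlt := hrow (i + 1) j hj (by lia) hi
    exact ⟨fun _ h => absurd h hlt.not_gt, fun h => absurd h hlt.not_gt⟩

theorem IsMT.scT_eq_zero {n : ℕ} {a : ℕ → ℕ → ℤ} (ha : IsMT n a) : scT n a = 0 := by
  obtain ⟨-, hrow, -⟩ := ha
  rw [scT, Nat.add_eq_zero_iff, Finset.card_eq_zero, Finset.card_eq_zero, newcomersF, scPairsF,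
    Finset.filter_eq_empty_iff, Finset.filter_eq_empty_iff]
  constructor
  · rintro ⟨i, j⟩ - ⟨hj, hji, hi, hlt, hlt'⟩
    exact (hrow (i + 1) j hj (Nat.succ_le_succ hji) hi).not_gt (hlt'.trans hlt)
  · rintro ⟨i, j⟩ - ⟨hj, hji, hi, heq, -⟩
    exact (hrow i j hj hji (Nat.le_of_succ_le hi)).ne heq

theorem GMTset_eq_MTset {n : ℕ} {k : Fin n → ℤ} (hk : StrictMono k) : GMTset n k = MTset n k :=
  Set.ext fun _ => ⟨fun ha => ⟨isMT_of_mem_GMTset hk ha, ha.2⟩, fun ha => ⟨ha.1.isGMT, ha.2⟩⟩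

theorem signedGMT_eq_ncard_MTset {n : ℕ} {k : Fin n → ℤ} (hk : StrictMono k) :
    signedGMT n k = (MTset n k).ncard := by
  have hfin : (MTset n k).Finite := GMTset_eq_MTset hk ▸ finite_GMTset n k
  rw [signedGMT, GMTset_eq_MTset hk,
    finsum_mem_congr rfl fun a ha => by rw [ha.1.scT_eq_zero, pow_zero],
    finsum_mem_eq_finite_toFinset_sum _ hfin, Finset.sum_const, nsmul_one,
    Set.ncard_eq_toFinset_card _ hfin]

/-- For every `n ≥ 1` and every integer tuple `k`, the polynomial `α` satisfies
`α(n;k) = Σ_{A ∈ 𝒢ₙ(k)} (-1)^{sc(A)}`. -/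
theorem alpha_eq_signed_sum_GMT (n : ℕ) (hn : 1 ≤ n)
    (α : (Fin n → ℤ) → ℚ) (hα : IsAlpha n α) (k : Fin n → ℤ) :
    α k = ∑ᶠ a ∈ GMTset n k, ((-1 : ℚ)) ^ (scT n a) := by
  obtain ⟨⟨P, -, hP⟩, hcount⟩ := hα
  have hα_poly : α ∈ integerPolyFun (Fin n) :=
    funext hP ▸ mvPolynomial_eval_mem_integerPolyFun P
  have hα_eq : α = signedGMT n :=
    eq_of_eq_on_strictMono hα_poly (signedGMT_mem_integerPolyFun n) fun l hl =>
      (hcount l hl).trans (signedGMT_eq_ncard_MTset hl).symm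
  exact congrFun hα_eq k
end

section
/- For every n ≥ 1 and every (k_1,…,k_n) ∈ ℤ^n, α(n;k_1,…,k_n) = Σ_{A ∈ 𝒯_n(k_1,…,k_n)} (−1)^{s(A)}, where 𝒯_n(k_1,…,k_n) is the set of triangular arrays with special entries and bottom row (k_1,…,k_n), and s(A) is the total number of special entries and inversions of A. -/
/-- Conditions on a triangular array `a` of size `n` together with a set `S` of
special entries (positions `(i,j)` with `1 < j < i ≤ n`, no two adjacent in the
same row): special entries equal both their parents, and every entry that is
not a parent of a special entry lies weakly between its two lower neighbours if
they weakly increase, and strictly between them if they strictly decrease (in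
which case it is an inversion). -/
def SpecOK (n : ℕ) (a : ℕ → ℕ → ℤ) (S : Finset (ℕ × ℕ)) : Prop :=
  (∀ p ∈ S, 1 < p.2 ∧ p.2 < p.1 ∧ p.1 ≤ n) ∧
  (∀ p ∈ S, ∀ q ∈ S, p.1 = q.1 → q.2 ≠ p.2 + 1) ∧
  (∀ p ∈ S, a (p.1 - 1) (p.2 - 1) = a p.1 p.2 ∧ a (p.1 - 1) p.2 = a p.1 p.2) ∧
  (∀ i j, 1 ≤ j → j ≤ i → i + 1 ≤ n → (i + 1, j) ∉ S → (i + 1, j + 1) ∉ S →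
    (a (i + 1) j ≤ a (i + 1) (j + 1) →
      a (i + 1) j ≤ a i j ∧ a i j ≤ a (i + 1) (j + 1)) ∧
    (a (i + 1) (j + 1) < a (i + 1) j →
      a (i + 1) (j + 1) < a i j ∧ a i j < a (i + 1) j))

/-- An element of `𝒯ₙ`: a triangular array together with an admissible set of
special entries. -/
def IsTArr (n : ℕ) (a : ℕ → ℕ → ℤ) (S : Finset (ℕ × ℕ)) : Prop :=
  IsTri n a ∧ SpecOK n a S

/-- The positions of inversions of an element of `𝒯ₙ`: entries that are not
parents of special entries and whose two lower neighbours strictly decrease. -/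
def invF (n : ℕ) (a : ℕ → ℕ → ℤ) (S : Finset (ℕ × ℕ)) : Finset (ℕ × ℕ) :=
  ((Finset.range (n + 1)) ×ˢ (Finset.range (n + 1))).filter (fun p =>
    1 ≤ p.2 ∧ p.2 ≤ p.1 ∧ p.1 + 1 ≤ n ∧
    (p.1 + 1, p.2) ∉ S ∧ (p.1 + 1, p.2 + 1) ∉ S ∧
    a (p.1 + 1) (p.2 + 1) < a (p.1 + 1) p.2)

/-- `s(A)`: the total number of special entries and inversions. -/
def sT (n : ℕ) (a : ℕ → ℕ → ℤ) (S : Finset (ℕ × ℕ)) : ℕ :=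
  S.card + (invF n a S).card

/-- The set `𝒯ₙ(k)` of triangular arrays with special entries and bottom row `k`. -/
def TSet (n : ℕ) (k : Fin n → ℤ) : Set ((ℕ → ℕ → ℤ) × Finset (ℕ × ℕ)) :=
  {A | IsTArr n A.1 A.2 ∧ BottomRow n A.1 k}

/-- The condition `a_{i,j-1} ≤ a_{i,j} ≤ a_{i,j+1} → a_{i-1,j-1} < a_{i-1,j}`. -/
def StrictCond (n : ℕ) (a : ℕ → ℕ → ℤ) : Prop :=
  ∀ i j, 2 ≤ j → j + 1 ≤ i → i ≤ n →
    a i (j - 1) ≤ a i j → a i j ≤ a i (j + 1) → a (i - 1) (j - 1) < a (i - 1) j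

/-! The signed sum satisfies a recursion on the bottom row: deleting the bottom row `k` expresses it
as a combination of signed sums over the rows `l` above, where each entry of `l` runs independently
through a range determined by two entries of `k` and the special positions. An inversion at `l j`
contributes the sign in `∑_{a ≤ x < b} = -∑_{b ≤ x < a}`, so up to a sign that depends only on the
special positions every such range is an extended sum, which maps polynomials to polynomials; hence
the signed sum is a polynomial function of `k`.

If `k` is strictly increasing, the special entries of a row `k` below `l` may be any set of entries
that agree with both entries above them. The sum of `(-1) ^ #s` over the subsets `s` of this set
vanishes unless the set is empty, which means that `l` is strictly increasing. What remains is the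
recursion for Monotone Triangles, so both polynomials agree on all strictly increasing `k`. -/

/-! ### Rows and the transition between consecutive rows -/

/-- Row `n` of a triangular array. The paper's entry `a_{n,j}` is `row a n (j - 1)`: rows are
indexed by `Fin n`, hence from `0`. The two entries below `row a n j` stand at `j.castSucc` and
`j.succ` in row `n + 1`. -/
def row (a : ℕ → ℕ → ℤ) (n : ℕ) (j : Fin n) : ℤ :=
  a n (j + 1)

theorem bottomRow_iff_row_eq {n : ℕ} {a : ℕ → ℕ → ℤ} {k : Fin n → ℤ} :
    BottomRow n a k ↔ row a n = k :=
  funext_iff.symm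

/-- The admissible sets of positions of special entries in row `n + 1`. -/
def specialSets (n : ℕ) : Finset (Finset (Fin (n + 1))) :=
  Finset.univ.filter fun s =>
    0 ∉ s ∧ Fin.last n ∉ s ∧ ∀ j : Fin n, j.castSucc ∈ s → j.succ ∉ s

theorem mem_specialSets {n : ℕ} {s : Finset (Fin (n + 1))} :
    s ∈ specialSets n ↔ 0 ∉ s ∧ Fin.last n ∉ s ∧ ∀ j : Fin n, j.castSucc ∈ s → j.succ ∉ s := by
  simp only [specialSets, Finset.mem_filter, Finset.mem_univ, true_and]

section Transition

variable {n : ℕ} (k : Fin (n + 1) → ℤ) (s : Finset (Fin (n + 1)))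

/-- The values allowed for the `j`-th entry of the row above `k`, when `s` is the set of positions
of the special entries of `k`. -/
noncomputable def entryRange (j : Fin n) : Finset ℤ :=
  if j.castSucc ∈ s then {k j.castSucc}
  else if j.succ ∈ s then {k j.succ}
  else if k j.castSucc ≤ k j.succ then Finset.Icc (k j.castSucc) (k j.succ)
  else Finset.Ioo (k j.succ) (k j.castSucc)

/-- The rows that may stand above the row `k` with special positions `s`. -/
noncomputable def rowsAbove : Finset (Fin n → ℤ) :=
  Fintype.piFinset (entryRange k s)

/-- The positions of the inversions in the row above `k`, where `s` is the set of positions of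
the special entries of `k`. -/
def rowInversions : Finset (Fin n) :=
  Finset.univ.filter fun j => j.castSucc ∉ s ∧ j.succ ∉ s ∧ k j.succ < k j.castSucc

variable {k s}

theorem mem_rowsAbove_iff (hs : s ∈ specialSets n) {l : Fin n → ℤ} :
    l ∈ rowsAbove k s ↔ ∀ j : Fin n,
      (j.castSucc ∈ s → l j = k j.castSucc) ∧ (j.succ ∈ s → l j = k j.succ) ∧
      (j.castSucc ∉ s → j.succ ∉ s →
        (k j.castSucc ≤ k j.succ → k j.castSucc ≤ l j ∧ l j ≤ k j.succ) ∧
        (k j.succ < k j.castSucc → k j.succ < l j ∧ l j < k j.castSucc)) := by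
  rw [rowsAbove, Fintype.mem_piFinset]
  refine forall_congr' fun j => ?_
  have hadj := (mem_specialSets.1 hs).2.2 j
  grind [entryRange]

end Transition

/-! ### Adding and removing the bottom row -/

/-- Add the bottom row `k` to a triangular array of size `n`. -/
def addRow {n : ℕ} (k : Fin (n + 1) → ℤ) (a : ℕ → ℕ → ℤ) (i j : ℕ) : ℤ :=
  if h : i = n + 1 ∧ 1 ≤ j ∧ j ≤ n + 1 then k ⟨j - 1, by omega⟩ else a i j

/-- Remove the rows below row `n`. -/
def dropRow (n : ℕ) (a : ℕ → ℕ → ℤ) (i j : ℕ) : ℤ :=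
  if i ≤ n then a i j else 0

section AddDropRow

variable {n : ℕ} (k : Fin (n + 1) → ℤ) (a : ℕ → ℕ → ℤ)

theorem addRow_of_le {i : ℕ} (hi : i ≤ n) : addRow k a i = a i := by
  funext j
  exact dif_neg (by omega)

theorem dropRow_of_le {i : ℕ} (hi : i ≤ n) : dropRow n a i = a i := by
  funext j
  exact if_pos hi

theorem row_addRow : row (addRow k a) (n + 1) = k := by
  funext j
  simp [row, addRow, Nat.succ_le_of_lt j.is_lt]

theorem row_addRow_of_le {i : ℕ} (hi : i ≤ n) : row (addRow k a) i = row a i :=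
  funext fun _ => congrFun (addRow_of_le k a hi) _

theorem row_dropRow_of_le {i : ℕ} (hi : i ≤ n) : row (dropRow n a) i = row a i :=
  funext fun _ => congrFun (dropRow_of_le a hi) _

variable {a}

theorem IsTri.addRow (ha : IsTri n a) : IsTri (n + 1) (addRow k a) := by
  intro i j hij
  rw [_root_.addRow, dif_neg (by omega), ha i j (by omega)]

theorem IsTri.dropRow (ha : IsTri (n + 1) a) : IsTri n (dropRow n a) := by
  intro i j hij
  unfold _root_.dropRow
  split_ifs with hi
  · exact ha i j (by omega)
  · rfl

theorem dropRow_addRow (ha : IsTri n a) : dropRow n (addRow k a) = a := by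
  funext i j
  by_cases hi : i ≤ n
  · rw [dropRow_of_le _ hi, addRow_of_le _ _ hi]
  · rw [dropRow, if_neg hi, ha i j (by omega)]

variable {k}

theorem addRow_dropRow (ha : IsTri (n + 1) a) (hk : row a (n + 1) = k) :
    addRow k (dropRow n a) = a := by
  subst hk
  funext i j
  unfold addRow
  split_ifs with h
  · obtain ⟨rfl, hj, -⟩ := h
    simp only [row, Nat.sub_add_cancel hj]
  · by_cases hi : i ≤ n
    · rw [dropRow_of_le _ hi]
    · rw [dropRow, if_neg hi, ha i j (by omega)]

end AddDropRow

/-- Add the special positions `s` in row `n + 1`. -/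
def addSpecial {n : ℕ} (s : Finset (Fin (n + 1))) (S : Finset (ℕ × ℕ)) : Finset (ℕ × ℕ) :=
  S ∪ s.image fun c : Fin (n + 1) => (n + 1, (c : ℕ) + 1)

/-- Remove the special positions below row `n`. -/
def dropSpecial (n : ℕ) (S : Finset (ℕ × ℕ)) : Finset (ℕ × ℕ) :=
  S.filter fun p => p.1 ≤ n

/-- The special positions in row `n + 1`. -/
def rowSpecial (n : ℕ) (S : Finset (ℕ × ℕ)) : Finset (Fin (n + 1)) :=
  Finset.univ.filter fun c => (n + 1, (c : ℕ) + 1) ∈ S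

section AddDropSpecial

variable {n : ℕ} {s : Finset (Fin (n + 1))} {S : Finset (ℕ × ℕ)}

theorem mem_rowSpecial {c : Fin (n + 1)} :
    c ∈ rowSpecial n S ↔ (n + 1, (c : ℕ) + 1) ∈ S := by
  simp only [rowSpecial, Finset.mem_filter, Finset.mem_univ, true_and]

theorem mem_addSpecial {p : ℕ × ℕ} :
    p ∈ addSpecial s S ↔ p ∈ S ∨ ∃ c ∈ s, (n + 1, (c : ℕ) + 1) = p := by
  simp only [addSpecial, Finset.mem_union, Finset.mem_image]

theorem mem_addSpecial_of_le {i j : ℕ} (hi : i ≤ n) : (i, j) ∈ addSpecial s S ↔ (i, j) ∈ S := by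
  rw [mem_addSpecial]
  refine or_iff_left ?_
  rintro ⟨c, -, hc⟩
  obtain ⟨rfl, -⟩ := Prod.mk.inj hc
  omega

theorem mem_addSpecial_last (hS : ∀ p ∈ S, p.1 ≤ n) (c : Fin (n + 1)) :
    (n + 1, (c : ℕ) + 1) ∈ addSpecial s S ↔ c ∈ s := by
  rw [mem_addSpecial, or_iff_right fun h => by simpa using hS _ h]
  constructor
  · rintro ⟨d, hd, hdc⟩
    rwa [← Fin.ext (Nat.succ_injective (Prod.mk.inj hdc).2)]
  · exact fun hc => ⟨c, hc, rfl⟩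

theorem rowSpecial_addSpecial (hS : ∀ p ∈ S, p.1 ≤ n) : rowSpecial n (addSpecial s S) = s := by
  ext c
  rw [mem_rowSpecial, mem_addSpecial_last hS]

theorem dropSpecial_addSpecial (hS : ∀ p ∈ S, p.1 ≤ n) : dropSpecial n (addSpecial s S) = S := by
  ext ⟨i, j⟩
  rw [dropSpecial, Finset.mem_filter, and_comm]
  exact ⟨fun h => (mem_addSpecial_of_le h.1).1 h.2,
    fun h => ⟨hS _ h, (mem_addSpecial_of_le (hS _ h)).2 h⟩⟩

theorem addSpecial_rowSpecial (hS : ∀ p ∈ S, 1 < p.2 ∧ p.2 < p.1 ∧ p.1 ≤ n + 1) :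
    addSpecial (rowSpecial n S) (dropSpecial n S) = S := by
  ext ⟨i, j⟩
  simp only [mem_addSpecial, mem_rowSpecial, dropSpecial, Finset.mem_filter]
  constructor
  · rintro (h | ⟨c, hc, hcp⟩)
    exacts [h.1, hcp ▸ hc]
  · intro h
    obtain ⟨hj, hji, hi⟩ := hS _ h
    dsimp only at hj hji hi
    rcases Nat.le_succ_iff.1 hi with hi | rfl
    · exact Or.inl ⟨h, hi⟩
    · have hsub : j - 1 + 1 = j := Nat.sub_add_cancel hj.le
      exact Or.inr ⟨⟨j - 1, by omega⟩, by simpa only [hsub] using h, Prod.ext rfl hsub⟩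

theorem card_addSpecial (hS : ∀ p ∈ S, p.1 ≤ n) :
    (addSpecial s S).card = S.card + s.card := by
  rw [addSpecial, Finset.card_union_of_disjoint, Finset.card_image_of_injective]
  · intro c d hcd
    simpa [Fin.ext_iff] using hcd
  · refine Finset.disjoint_left.2 fun p hp hp' => ?_
    obtain ⟨c, -, rfl⟩ := Finset.mem_image.1 hp'
    exact absurd (hS _ hp) (by simp)

end AddDropSpecial
/-! ### The row recursion for `𝒯ₙ` -/

theorem exists_fin_add_one_eq {n j : ℕ} (hj : 1 ≤ j) (hjn : j ≤ n) :
    ∃ c : Fin n, (c : ℕ) + 1 = j :=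
  ⟨⟨j - 1, by omega⟩, Nat.sub_add_cancel hj⟩

section TSet

variable {n : ℕ} {a b : ℕ → ℕ → ℤ} {s : Finset (Fin (n + 1))} {S : Finset (ℕ × ℕ)}

theorem SpecOK.congr (h : SpecOK n a S) (hab : ∀ i ≤ n, a i = b i) : SpecOK n b S := by
  obtain ⟨hpos, hadj, hparents, hbetween⟩ := h
  refine ⟨hpos, hadj, fun p hp => ?_, fun i j hj hji hi => ?_⟩
  · have hp1 := (hpos p hp).2.2
    rw [← hab _ hp1, ← hab _ ((Nat.sub_le _ _).trans hp1)]
    exact hparents p hp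
  · rw [← hab _ hi, ← hab _ (by omega)]
    exact hbetween i j hj hji hi

theorem SpecOK.fst_le (h : SpecOK n a S) : ∀ p ∈ S, p.1 ≤ n :=
  fun p hp => (h.1 p hp).2.2

theorem SpecOK.dropSpecial (h : SpecOK (n + 1) a S) : SpecOK n a (dropSpecial n S) := by
  obtain ⟨hpos, hadj, hparents, hbetween⟩ := h
  simp only [SpecOK, _root_.dropSpecial, Finset.mem_filter]
  refine ⟨fun p hp => ⟨(hpos p hp.1).1, (hpos p hp.1).2.1, hp.2⟩,
    fun p hp q hq => hadj p hp.1 q hq.1, fun p hp => hparents p hp.1,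
    fun i j hj hji hi hleft hright => ?_⟩
  exact hbetween i j hj hji (by omega) (fun hp => hleft ⟨hp, hi⟩) (fun hp => hright ⟨hp, hi⟩)

theorem SpecOK.rowSpecial_mem_specialSets (h : SpecOK (n + 1) a S) :
    rowSpecial n S ∈ specialSets n := by
  obtain ⟨hpos, hadj, -, -⟩ := h
  simp only [mem_specialSets, mem_rowSpecial]
  refine ⟨fun h0 => ?_, fun hlast => ?_, fun j hj hj' => hadj _ hj _ hj' rfl rfl⟩
  · simpa using hpos _ h0
  · simpa using hpos _ hlast

theorem SpecOK.row_mem_rowsAbove (h : SpecOK (n + 1) a S) :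
    row a n ∈ rowsAbove (row a (n + 1)) (rowSpecial n S) := by
  rw [mem_rowsAbove_iff h.rowSpecial_mem_specialSets]
  obtain ⟨-, -, hparents, hbetween⟩ := h
  simp only [mem_rowSpecial]
  exact fun j => ⟨fun hj => (hparents _ hj).2, fun hj => (hparents _ hj).1,
    hbetween n (j + 1) (by omega) j.is_lt le_rfl⟩

theorem SpecOK.addSpecial (h : SpecOK n a S) (hs : s ∈ specialSets n)
    (hrow : row a n ∈ rowsAbove (row a (n + 1)) s) : SpecOK (n + 1) a (addSpecial s S) := by
  have hS := h.fst_le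
  rw [mem_rowsAbove_iff hs] at hrow
  obtain ⟨hzero, hlast, hsadj⟩ := mem_specialSets.1 hs
  obtain ⟨hpos, hadj, hparents, hbetween⟩ := h
  refine ⟨fun p hp => ?_, fun p hp q hq hpq hq2 => ?_, fun p hp => ?_, ?_⟩
  · rcases mem_addSpecial.1 hp with hp | ⟨c, hc, rfl⟩
    · exact ⟨(hpos p hp).1, (hpos p hp).2.1, (hS p hp).trans n.le_succ⟩
    · have hcpos : 0 < c := Fin.pos_of_ne_zero fun h => hzero (h ▸ hc)
      have hclt : c < Fin.last n := Fin.lt_last_iff_ne_last.2 fun h => hlast (h ▸ hc)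
      exact ⟨Nat.succ_lt_succ hcpos, Nat.succ_lt_succ hclt, le_rfl⟩
  · rcases mem_addSpecial.1 hp with hp | ⟨c, hc, rfl⟩ <;>
      rcases mem_addSpecial.1 hq with hq | ⟨d, hd, rfl⟩
    · exact hadj p hp q hq hpq hq2
    · exact absurd (hpq.ge.trans (hS p hp)) n.not_succ_le_self
    · exact absurd (hpq.le.trans (hS q hq)) n.not_succ_le_self
    · have hdc : (d : ℕ) = c + 1 := Nat.succ_injective hq2
      have hcn : (c : ℕ) < n := by omega
      exact hsadj ⟨c, hcn⟩ hc ((Fin.ext hdc : d = Fin.succ ⟨c, hcn⟩) ▸ hd)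
  · rcases mem_addSpecial.1 hp with hp | ⟨c, hc, rfl⟩
    · exact hparents p hp
    · constructor
      · obtain ⟨j, rfl⟩ := Fin.exists_succ_eq.2 fun h => hzero (h ▸ hc)
        exact (hrow j).2.1 hc
      · obtain ⟨j, rfl⟩ := Fin.exists_castSucc_eq.2 fun h => hlast (h ▸ hc)
        exact (hrow j).1 hc
  · intro i j hj hji hi
    rcases Nat.lt_or_eq_of_le (Nat.le_of_succ_le_succ hi) with hi | rfl
    · rw [mem_addSpecial_of_le hi, mem_addSpecial_of_le hi]
      exact hbetween i j hj hji hi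
    · obtain ⟨c, rfl⟩ := exists_fin_add_one_eq hj hji
      rw [← Fin.val_castSucc c, mem_addSpecial_last hS, Fin.val_castSucc, ← Fin.val_succ,
        mem_addSpecial_last hS]
      exact (hrow c).2.2

end TSet

section Count

variable {n : ℕ} {a b : ℕ → ℕ → ℤ} {s : Finset (Fin (n + 1))} {S : Finset (ℕ × ℕ)}

theorem mem_invF {p : ℕ × ℕ} : p ∈ invF n a S ↔
    1 ≤ p.2 ∧ p.2 ≤ p.1 ∧ p.1 + 1 ≤ n ∧ (p.1 + 1, p.2) ∉ S ∧ (p.1 + 1, p.2 + 1) ∉ S ∧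
      a (p.1 + 1) (p.2 + 1) < a (p.1 + 1) p.2 := by
  simp only [invF, Finset.mem_filter, Finset.mem_product, Finset.mem_range]
  exact and_iff_right_of_imp fun h => by omega

theorem sT_congr (hab : ∀ i ≤ n, a i = b i) : sT n a S = sT n b S := by
  have hinv : invF n a S = invF n b S := by
    ext p
    simp only [mem_invF]
    refine and_congr_right fun _ => and_congr_right fun _ => and_congr_right fun hp => ?_
    rw [hab _ hp]
  rw [sT, sT, hinv]

theorem mem_rowInversions_iff_addSpecial (hS : ∀ p ∈ S, p.1 ≤ n) {j : Fin n} :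
    j ∈ rowInversions (row a (n + 1)) s ↔
      (n + 1, (j : ℕ) + 1) ∉ addSpecial s S ∧ (n + 1, (j : ℕ) + 1 + 1) ∉ addSpecial s S ∧
        a (n + 1) (j + 1 + 1) < a (n + 1) (j + 1) := by
  have hleft := mem_addSpecial_last (s := s) hS j.castSucc
  have hright := mem_addSpecial_last (s := s) hS j.succ
  rw [Fin.val_castSucc] at hleft
  rw [Fin.val_succ] at hright
  simp only [rowInversions, Finset.mem_filter, Finset.mem_univ, true_and, hleft, hright]
  rfl

theorem invF_addSpecial (hS : ∀ p ∈ S, p.1 ≤ n) :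
    invF (n + 1) a (addSpecial s S) = invF n a S ∪
      (rowInversions (row a (n + 1)) s).image fun j : Fin n => (n, (j : ℕ) + 1) := by
  ext ⟨i, j⟩
  simp only [Finset.mem_union, Finset.mem_image, mem_invF,
    mem_rowInversions_iff_addSpecial hS, Prod.mk.injEq]
  constructor
  · rintro ⟨hj, hji, hi, h⟩
    rcases Nat.lt_or_eq_of_le (Nat.le_of_succ_le_succ hi) with hi | rfl
    · rw [mem_addSpecial_of_le hi, mem_addSpecial_of_le hi] at h
      exact Or.inl ⟨hj, hji, hi, h⟩
    · obtain ⟨c, rfl⟩ := exists_fin_add_one_eq hj hji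
      exact Or.inr ⟨c, h, rfl, rfl⟩
  · rintro (⟨hj, hji, hi, h⟩ | ⟨c, hc, rfl, rfl⟩)
    · rw [mem_addSpecial_of_le hi, mem_addSpecial_of_le hi]
      exact ⟨hj, hji, hi.trans n.le_succ, h⟩
    · exact ⟨by omega, c.is_lt, le_rfl, hc⟩

theorem card_invF_addSpecial (hS : ∀ p ∈ S, p.1 ≤ n) :
    (invF (n + 1) a (addSpecial s S)).card =
      (invF n a S).card + (rowInversions (row a (n + 1)) s).card := by
  rw [invF_addSpecial hS, Finset.card_union_of_disjoint, Finset.card_image_of_injective]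
  · intro c d hcd
    simpa [Fin.ext_iff] using hcd
  · refine Finset.disjoint_left.2 fun p hp hp' => ?_
    obtain ⟨c, -, rfl⟩ := Finset.mem_image.1 hp'
    exact n.not_succ_le_self (mem_invF.1 hp).2.2.1

theorem sT_addSpecial (hS : ∀ p ∈ S, p.1 ≤ n) :
    sT (n + 1) a (addSpecial s S) =
      s.card + (rowInversions (row a (n + 1)) s).card + sT n a S := by
  rw [sT, sT, card_addSpecial hS, card_invF_addSpecial hS]
  omega

end Count

/-- The element of `𝒯ₙ₊₁` obtained from `A ∈ 𝒯ₙ` by adding the bottom row `k` with special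
positions `s`. -/
def TSet.extend {n : ℕ} (k : Fin (n + 1) → ℤ) (s : Finset (Fin (n + 1)))
    (A : (ℕ → ℕ → ℤ) × Finset (ℕ × ℕ)) : (ℕ → ℕ → ℤ) × Finset (ℕ × ℕ) :=
  (addRow k A.1, addSpecial s A.2)

theorem mem_TSet_iff {n : ℕ} {k : Fin n → ℤ} {A : (ℕ → ℕ → ℤ) × Finset (ℕ × ℕ)} :
    A ∈ TSet n k ↔ IsTri n A.1 ∧ SpecOK n A.1 A.2 ∧ row A.1 n = k := by
  rw [← bottomRow_iff_row_eq, ← and_assoc]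
  rfl

section Recursion

variable {n : ℕ} {k : Fin (n + 1) → ℤ} {s : Finset (Fin (n + 1))} {l : Fin n → ℤ}
  {A : (ℕ → ℕ → ℤ) × Finset (ℕ × ℕ)}

theorem TSet.extend_mem (hs : s ∈ specialSets n) (hl : l ∈ rowsAbove k s) (hA : A ∈ TSet n l) :
    extend k s A ∈ TSet (n + 1) k := by
  obtain ⟨htri, hspec, rfl⟩ := mem_TSet_iff.1 hA
  refine mem_TSet_iff.2 ⟨htri.addRow k, ?_, row_addRow k A.1⟩
  refine (hspec.congr fun i hi => (addRow_of_le k A.1 hi).symm).addSpecial hs ?_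
  rwa [row_addRow, row_addRow_of_le k A.1 le_rfl]

theorem TSet.exists_extend_eq (hA : A ∈ TSet (n + 1) k) :
    ∃ s ∈ specialSets n, ∃ l ∈ rowsAbove k s, ∃ B ∈ TSet n l, extend k s B = A := by
  obtain ⟨htri, hspec, rfl⟩ := mem_TSet_iff.1 hA
  refine ⟨rowSpecial n A.2, hspec.rowSpecial_mem_specialSets, row A.1 n, hspec.row_mem_rowsAbove,
    (dropRow n A.1, dropSpecial n A.2), ?_,
    Prod.ext (addRow_dropRow htri rfl) (addSpecial_rowSpecial hspec.1)⟩
  exact mem_TSet_iff.2 ⟨htri.dropRow,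
    hspec.dropSpecial.congr fun i hi => (dropRow_of_le A.1 hi).symm, row_dropRow_of_le A.1 le_rfl⟩

theorem TSet_succ (k : Fin (n + 1) → ℤ) :
    TSet (n + 1) k =
      ⋃ x ∈ (specialSets n).sigma (rowsAbove k), TSet.extend k x.1 '' TSet n x.2 := by
  ext A
  simp only [Set.mem_iUnion, Finset.mem_sigma, Set.mem_image, Sigma.exists, exists_prop]
  constructor
  · intro hA
    obtain ⟨s, hs, l, hl, h⟩ := TSet.exists_extend_eq hA
    exact ⟨s, l, ⟨hs, hl⟩, h⟩
  · rintro ⟨s, l, ⟨hs, hl⟩, B, hB, rfl⟩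
    exact TSet.extend_mem hs hl hB

theorem TSet.injOn_extend : Set.InjOn (extend k s) (TSet n l) := by
  intro A hA B hB hAB
  obtain ⟨hrow, hspecial⟩ := Prod.mk.inj hAB
  rw [mem_TSet_iff] at hA hB
  refine Prod.ext ?_ ?_
  · rw [← dropRow_addRow k hA.1, hrow, dropRow_addRow k hB.1]
  · rw [← dropSpecial_addSpecial (s := s) hA.2.1.fst_le, hspecial,
      dropSpecial_addSpecial hB.2.1.fst_le]

theorem TSet.pairwiseDisjoint_extend (t : Set (Σ _ : Finset (Fin (n + 1)), Fin n → ℤ)) :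
    t.PairwiseDisjoint fun x => extend k x.1 '' TSet n x.2 := by
  rintro ⟨s, l⟩ - ⟨s', l'⟩ - hne
  refine Set.disjoint_left.2 ?_
  rintro _ ⟨A, hA, rfl⟩ ⟨B, hB, hBA⟩
  obtain ⟨hrow, hspecial⟩ := Prod.mk.inj hBA
  obtain ⟨hAtri, hAspec, rfl⟩ := mem_TSet_iff.1 hA
  obtain ⟨hBtri, hBspec, rfl⟩ := mem_TSet_iff.1 hB
  refine hne ?_
  rw [← dropRow_addRow k hAtri, ← dropRow_addRow k hBtri, hrow,
    ← rowSpecial_addSpecial (s := s) hAspec.fst_le, ← hspecial,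
    rowSpecial_addSpecial hBspec.fst_le]

theorem TSet_zero (k : Fin 0 → ℤ) : TSet 0 k = {(0, ∅)} := by
  ext A
  rw [mem_TSet_iff, Set.mem_singleton_iff]
  constructor
  · rintro ⟨htri, hspec, -⟩
    refine Prod.ext (funext₂ fun i j => htri i j (by omega)) ?_
    refine Finset.eq_empty_of_forall_notMem fun p hp => ?_
    have := hspec.1 p hp
    omega
  · rintro rfl
    exact ⟨fun _ _ _ => rfl, by simp [SpecOK], Subsingleton.elim _ _⟩

theorem finite_TSet {n : ℕ} (k : Fin n → ℤ) : (TSet n k).Finite := by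
  induction n with
  | zero => exact TSet_zero k ▸ Set.finite_singleton _
  | succ n ih =>
    rw [TSet_succ]
    exact Set.Finite.biUnion (Finset.finite_toSet _) fun x _ => (ih x.2).image _

end Recursion

/-- The signed enumeration `∑ (-1) ^ s(A)` of `𝒯ₙ(k)`. -/
noncomputable def signedCount (n : ℕ) (k : Fin n → ℤ) : ℚ :=
  ∑ᶠ A ∈ TSet n k, (-1) ^ sT n A.1 A.2

theorem signedCount_zero (k : Fin 0 → ℤ) : signedCount 0 k = 1 := by
  rw [signedCount, TSet_zero, finsum_mem_singleton]
  rfl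

theorem TSet.sT_extend {n : ℕ} {k : Fin (n + 1) → ℤ} {s : Finset (Fin (n + 1))} {l : Fin n → ℤ}
    {A : (ℕ → ℕ → ℤ) × Finset (ℕ × ℕ)} (hA : A ∈ TSet n l) :
    sT (n + 1) (extend k s A).1 (extend k s A).2 =
      s.card + (rowInversions k s).card + sT n A.1 A.2 := by
  rw [extend, sT_addSpecial (mem_TSet_iff.1 hA).2.1.fst_le, row_addRow,
    sT_congr fun i hi => addRow_of_le k A.1 hi]

theorem signedCount_succ {n : ℕ} (k : Fin (n + 1) → ℤ) :
    signedCount (n + 1) k = ∑ s ∈ specialSets n, ∑ l ∈ rowsAbove k s,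
      (-1) ^ (s.card + (rowInversions k s).card) * signedCount n l := by
  rw [Finset.sum_sigma', ← finsum_mem_coe_finset, signedCount, TSet_succ]
  refine (finsum_mem_biUnion (TSet.pairwiseDisjoint_extend _) (Finset.finite_toSet _)
    fun x _ => (finite_TSet x.2).image _).trans ?_
  refine finsum_mem_congr rfl fun x _ => ?_
  rw [finsum_mem_image TSet.injOn_extend, signedCount, mul_finsum_mem]
  exact finsum_mem_congr rfl fun A hA => by rw [TSet.sT_extend hA, pow_add]

/-! ### Polynomiality -/

/-- The algebra of functions of integer variables that are given by a polynomial with rational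
coefficients. -/
noncomputable def polyFun (σ : Type*) : Subalgebra ℚ ((σ → ℤ) → ℚ) :=
  (MvPolynomial.aeval fun (i : σ) (k : σ → ℤ) => (k i : ℚ)).range

section PolyFun

variable {σ : Type*} {f : (σ → ℤ) → ℚ}

theorem aeval_coord_apply (P : MvPolynomial σ ℚ) (k : σ → ℤ) :
    MvPolynomial.aeval (fun (i : σ) (k : σ → ℤ) => (k i : ℚ)) P k =
      MvPolynomial.eval (fun i => (k i : ℚ)) P := by
  have := MvPolynomial.comp_aeval_apply (fun (i : σ) (k : σ → ℤ) => (k i : ℚ))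
    (Pi.evalAlgHom ℚ (fun _ : σ → ℤ => ℚ) k) P
  simpa [MvPolynomial.aeval_eq_eval] using this

theorem mem_polyFun_iff :
    f ∈ polyFun σ ↔
      ∃ P : MvPolynomial σ ℚ, ∀ k, f k = MvPolynomial.eval (fun i => (k i : ℚ)) P := by
  simp only [polyFun, AlgHom.mem_range, funext_iff, aeval_coord_apply, eq_comm]

theorem coord_mem_polyFun (i : σ) : (fun k : σ → ℤ => (k i : ℚ)) ∈ polyFun σ :=
  mem_polyFun_iff.2 ⟨MvPolynomial.X i, fun k => by rw [MvPolynomial.eval_X]⟩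

theorem polynomial_eval_mem_polyFun (hf : f ∈ polyFun σ) (Q : Polynomial ℚ) :
    (fun k => Q.eval (f k)) ∈ polyFun σ := by
  convert (Polynomial.aeval (⟨f, hf⟩ : polyFun σ) Q).2 using 1
  funext k
  rw [Polynomial.aeval_subalgebra_coe, Polynomial.aeval_fn_apply, Polynomial.coe_aeval_eq_eval]

end PolyFun

section ExtSum

variable {M : Type*} [AddCommGroup M]

/-- The sum of `f` over `a ≤ x ≤ b`, extended to all `a` and `b` in such a way that
`extSum f a b + extSum f (b + 1) c = extSum f a c`. -/
noncomputable def extSum (f : ℤ → M) (a b : ℤ) : M :=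
  if a ≤ b then ∑ x ∈ Finset.Icc a b, f x else -∑ x ∈ Finset.Ioo b a, f x

theorem sum_Ico_eq_sub {f G : ℤ → M} (h : ∀ x, G (x + 1) - G x = f x) {a b : ℤ} (hab : a ≤ b) :
    ∑ x ∈ Finset.Ico a b, f x = G b - G a := by
  induction b, hab using Int.leInduction with
  | base => rw [Finset.Ico_self, Finset.sum_empty, sub_self]
  | succ b hab ih =>
    rw [← Finset.insert_Ico_right_eq_Ico_add_one hab, Finset.sum_insert (by simp), ih, ← h,
      sub_add_sub_cancel]

theorem extSum_eq_sub {f G : ℤ → M} (h : ∀ x, G (x + 1) - G x = f x) (a b : ℤ) :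
    extSum f a b = G (b + 1) - G a := by
  unfold extSum
  split_ifs with hab
  · rw [← Finset.Ico_add_one_right_eq_Icc, sum_Ico_eq_sub h (by omega)]
  · rw [← Finset.Ico_add_one_left_eq_Ioo, sum_Ico_eq_sub h (by omega), neg_sub]

end ExtSum

theorem exists_polynomial_sub_eq_pow (m : ℕ) :
    ∃ Q : Polynomial ℚ, ∀ x : ℚ, Q.eval (x + 1) - Q.eval x = x ^ m := by
  refine ⟨Polynomial.C ((m + 1 : ℚ)⁻¹) * Polynomial.bernoulli (m + 1), fun x => ?_⟩
  rw [Polynomial.eval_C_mul, Polynomial.eval_C_mul, add_comm x,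
    Polynomial.bernoulli_eval_one_add, Nat.add_sub_cancel]
  push_cast
  field_simp
  ring

theorem extSum_pow_mem_polyFun {σ : Type*} (i j : σ) (m : ℕ) :
    (fun k : σ → ℤ => extSum (fun x => (x : ℚ) ^ m) (k i) (k j)) ∈ polyFun σ := by
  obtain ⟨Q, hQ⟩ := exists_polynomial_sub_eq_pow m
  have hsum (k : σ → ℤ) : extSum (fun x => (x : ℚ) ^ m) (k i) (k j) =
      Q.eval ((k j : ℚ) + 1) - Q.eval (k i : ℚ) := by
    rw [extSum_eq_sub (G := fun x => Q.eval (x : ℚ)) fun x => by push_cast; exact hQ x]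
    push_cast
    rfl
  simp only [hsum]
  exact sub_mem (polynomial_eval_mem_polyFun (add_mem (coord_mem_polyFun j) (one_mem _)) Q)
    (polynomial_eval_mem_polyFun (coord_mem_polyFun i) Q)

section SignedSum

variable {n : ℕ} (k : Fin (n + 1) → ℤ) (s : Finset (Fin (n + 1)))

/-- The sum of `f` over the values allowed for the `j`-th entry of the row above `k`, counted with
sign `-1` if this entry is an inversion. -/
noncomputable def entrySum (j : Fin n) (f : ℤ → ℚ) : ℚ :=
  (if j ∈ rowInversions k s then -1 else 1) * ∑ x ∈ entryRange k s j, f x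

theorem sum_rowsAbove_prod (f : Fin n → ℤ → ℚ) :
    ∑ l ∈ rowsAbove k s, (-1) ^ (rowInversions k s).card * ∏ j, f j (l j) =
      ∏ j, entrySum k s j (f j) := by
  simp only [entrySum, Finset.prod_mul_distrib, Finset.prod_univ_sum, Finset.mul_sum,
    Finset.prod_ite_mem, Finset.univ_inter, Finset.prod_const]
  rfl

theorem entrySum_eq (j : Fin n) (f : ℤ → ℚ) :
    entrySum k s j f =
      if j.castSucc ∈ s then f (k j.castSucc)
      else if j.succ ∈ s then f (k j.succ)
      else extSum f (k j.castSucc) (k j.succ) := by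
  unfold entrySum entryRange extSum rowInversions
  simp only [Finset.mem_filter, Finset.mem_univ, true_and, ← not_le]
  split_ifs <;> simp_all

end SignedSum

theorem entrySum_pow_mem_polyFun {n : ℕ} (s : Finset (Fin (n + 1))) (j : Fin n) (m : ℕ) :
    (fun k => entrySum k s j fun x => (x : ℚ) ^ m) ∈ polyFun (Fin (n + 1)) := by
  simp only [entrySum_eq]
  split_ifs
  · exact pow_mem (coord_mem_polyFun _) m
  · exact pow_mem (coord_mem_polyFun _) m
  · exact extSum_pow_mem_polyFun _ _ m

theorem signedCount_mem_polyFun (n : ℕ) : signedCount n ∈ polyFun (Fin n) := by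
  induction n with
  | zero => exact (funext signedCount_zero : signedCount 0 = 1) ▸ one_mem _
  | succ n ih =>
    obtain ⟨P, hP⟩ := mem_polyFun_iff.1 ih
    have hsucc : signedCount (n + 1) = ∑ s ∈ specialSets n, ∑ d ∈ P.support,
        ((-1) ^ s.card * P.coeff d) • ∏ j, fun k => entrySum k s j fun x => (x : ℚ) ^ d j := by
      funext k
      simp only [signedCount_succ, hP, MvPolynomial.eval_eq', Finset.sum_apply, Pi.smul_apply,
        Finset.prod_apply, ← sum_rowsAbove_prod, smul_eq_mul, Finset.mul_sum]
      refine Finset.sum_congr rfl fun s _ => Finset.sum_comm.trans ?_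
      refine Finset.sum_congr rfl fun d _ => Finset.sum_congr rfl fun l _ => ?_
      ring
    rw [hsucc]
    exact sum_mem fun s _ => sum_mem fun d _ => Subalgebra.smul_mem _
      (prod_mem fun j _ => entrySum_pow_mem_polyFun s j (d j)) _

theorem eq_of_eval_eq_of_strictMono {n : ℕ} {R : Type*} [CommRing R] [IsDomain R] [CharZero R]
    {p q : MvPolynomial (Fin n) R}
    (h : ∀ k : Fin n → ℕ, StrictMono k →
      MvPolynomial.eval (fun i => (k i : R)) p = MvPolynomial.eval (fun i => (k i : R)) q) :
    p = q := by
  let M := (p - q).totalDegree + 1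
  let block (i : Fin n) : Finset ℕ := Finset.Ico (i * M) ((i + 1) * M)
  rw [← sub_eq_zero]
  refine MvPolynomial.eq_zero_of_eval_zero_at_prod_finset _
    (fun i => (block i).map Nat.castEmbedding) (fun i => ?_) fun x hx => ?_
  · rw [Finset.card_map, Nat.card_Ico, Nat.succ_mul, Nat.add_sub_cancel_left]
    exact Nat.lt_succ_of_le (MvPolynomial.degreeOf_le_totalDegree _ i)
  · choose k hk hkx using fun i => Finset.mem_map.1 (hx i)
    obtain rfl : (fun i => (k i : R)) = x := funext hkx
    rw [map_sub, sub_eq_zero]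
    refine h k fun i j hij => ?_
    calc k i < (i + 1) * M := (Finset.mem_Ico.1 (hk i)).2
      _ ≤ j * M := Nat.mul_le_mul_right M hij
      _ ≤ k j := (Finset.mem_Ico.1 (hk j)).1

/-! ### Strictly increasing bottom rows -/

/-- The rows that interlace weakly with `k`. -/
noncomputable def interlacingRows {n : ℕ} (k : Fin (n + 1) → ℤ) : Finset (Fin n → ℤ) :=
  Fintype.piFinset fun j => Finset.Icc (k j.castSucc) (k j.succ)

/-- The positions of the entries of `k` that agree with both entries of `l` above them. -/
def doubledPositions {n : ℕ} (k : Fin (n + 1) → ℤ) (l : Fin n → ℤ) : Finset (Fin (n + 1)) :=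
  Finset.univ.filter fun c =>
    c ≠ 0 ∧ c ≠ Fin.last n ∧ ∀ j : Fin n, j.castSucc = c ∨ j.succ = c → l j = k c

section Interlacing

variable {n : ℕ} {k : Fin (n + 1) → ℤ} {l : Fin n → ℤ} {s : Finset (Fin (n + 1))}

theorem mem_interlacingRows :
    l ∈ interlacingRows k ↔ ∀ j : Fin n, k j.castSucc ≤ l j ∧ l j ≤ k j.succ := by
  simp only [interlacingRows, Fintype.mem_piFinset, Finset.mem_Icc]

theorem mem_doubledPositions {c : Fin (n + 1)} : c ∈ doubledPositions k l ↔
    c ≠ 0 ∧ c ≠ Fin.last n ∧ ∀ j : Fin n, j.castSucc = c ∨ j.succ = c → l j = k c := by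
  simp only [doubledPositions, Finset.mem_filter, Finset.mem_univ, true_and]

theorem mem_specialSets_and_mem_rowsAbove_iff (hk : StrictMono k) :
    s ∈ specialSets n ∧ l ∈ rowsAbove k s ↔
      s ∈ (doubledPositions k l).powerset ∧ l ∈ interlacingRows k := by
  have hlt (j : Fin n) : k j.castSucc < k j.succ := hk j.castSucc_lt_succ
  rw [Finset.mem_powerset, mem_interlacingRows]
  constructor
  · rintro ⟨hs, hl⟩
    rw [mem_rowsAbove_iff hs] at hl
    obtain ⟨hzero, hlast, -⟩ := mem_specialSets.1 hs
    refine ⟨fun c hc => mem_doubledPositions.2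
      ⟨fun h => hzero (h ▸ hc), fun h => hlast (h ▸ hc), ?_⟩, fun j => ?_⟩
    · rintro j (rfl | rfl)
      exacts [(hl j).1 hc, (hl j).2.1 hc]
    · obtain ⟨hleft, hright, hbetween⟩ := hl j
      by_cases hj : j.castSucc ∈ s
      · exact ⟨(hleft hj).ge, (hleft hj).trans_le (hlt j).le⟩
      by_cases hj' : j.succ ∈ s
      · exact ⟨(hlt j).le.trans_eq (hright hj').symm, (hright hj').le⟩
      exact (hbetween hj hj').1 (hlt j).le
  · rintro ⟨hs, hl⟩
    have hdoubled {c : Fin (n + 1)} (hc : c ∈ s) := mem_doubledPositions.1 (hs hc)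
    have hleft {j : Fin n} (hj : j.castSucc ∈ s) := (hdoubled hj).2.2 j (Or.inl rfl)
    have hright {j : Fin n} (hj : j.succ ∈ s) := (hdoubled hj).2.2 j (Or.inr rfl)
    have hspecial : s ∈ specialSets n := mem_specialSets.2
      ⟨fun h => (hdoubled h).1 rfl, fun h => (hdoubled h).2.1 rfl,
        fun j hj hj' => (hlt j).ne ((hleft hj).symm.trans (hright hj'))⟩
    exact ⟨hspecial, (mem_rowsAbove_iff hspecial).2 fun j =>
      ⟨hleft, hright, fun _ _ => ⟨fun _ => hl j, fun h => absurd h (hlt j).not_gt⟩⟩⟩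

theorem doubledPositions_eq_empty_iff (hl : l ∈ interlacingRows k) :
    doubledPositions k l = ∅ ↔ StrictMono l := by
  rw [mem_interlacingRows] at hl
  constructor
  · intro hempty
    cases n with
    | zero => exact Subsingleton.strictMono l
    | succ n =>
      refine Fin.strictMono_iff_lt_succ.2 fun i => lt_of_not_ge fun hge => ?_
      have hleft := (hl i.castSucc).2
      have hright := (hl i.succ).1
      rw [Fin.succ_castSucc] at hleft
      refine Finset.notMem_empty i.succ.castSucc (hempty ▸ mem_doubledPositions.2 ⟨?_, ?_, ?_⟩)
      · simp [Fin.ext_iff]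
      · exact (Fin.castSucc_lt_last _).ne
      · rintro j (h | h)
        · rw [Fin.castSucc_injective _ h]
          exact le_antisymm (hge.trans hleft) hright
        · rw [← Fin.succ_castSucc] at h
          rw [Fin.succ_injective _ h]
          exact le_antisymm hleft (hright.trans hge)
  · intro hmono
    refine Finset.eq_empty_of_forall_notMem fun c hc => ?_
    obtain ⟨hzero, hlast, heq⟩ := mem_doubledPositions.1 hc
    obtain ⟨i, hi⟩ := Fin.exists_succ_eq.2 hzero
    obtain ⟨j, hj⟩ := Fin.exists_castSucc_eq.2 hlast
    have hij : i.castSucc < j.castSucc := i.castSucc_lt_succ.trans_eq (hi.trans hj.symm)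
    have hlij : l i = l j := (heq i (Or.inr hi)).trans (heq j (Or.inl hj)).symm
    exact (hmono (Fin.castSucc_lt_castSucc_iff.1 hij)).ne hlij

theorem rowInversions_eq_empty (hk : Monotone k) : rowInversions k s = ∅ :=
  Finset.filter_eq_empty_iff.2 fun j _ h => (hk j.castSucc_le_succ).not_gt h.2.2

theorem signedCount_succ_of_strictMono (hk : StrictMono k) :
    signedCount (n + 1) k = ∑ l ∈ (interlacingRows k).filter StrictMono, signedCount n l := by
  have hcancel (l : Fin n → ℤ) : ∑ s ∈ (doubledPositions k l).powerset, (-1 : ℚ) ^ s.card =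
      if doubledPositions k l = ∅ then 1 else 0 := by
    exact_mod_cast Finset.sum_powerset_neg_one_pow_card
  simp only [signedCount_succ, rowInversions_eq_empty hk.monotone, Finset.card_empty, add_zero]
  rw [Finset.sum_comm' fun _ _ => mem_specialSets_and_mem_rowsAbove_iff hk, Finset.sum_filter]
  refine Finset.sum_congr rfl fun l hl => ?_
  simp only [← Finset.sum_mul, hcancel, doubledPositions_eq_empty_iff hl, ite_mul, one_mul,
    zero_mul]

end Interlacing

/-! ### Monotone triangles -/

theorem isMT_iff {n : ℕ} {a : ℕ → ℕ → ℤ} :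
    IsMT n a ↔ IsTri n a ∧ (∀ i ≤ n, StrictMono (row a i)) ∧
      ∀ i < n, row a i ∈ interlacingRows (row a (i + 1)) := by
  refine and_congr_right fun _ => and_congr ?_ ?_
  · constructor
    · intro h i hi
      cases i with
      | zero => exact Subsingleton.strictMono _
      | succ i => exact Fin.strictMono_iff_lt_succ.2 fun j => h _ _ (by omega) (by simp) hi
    · intro h i j hj hji hi
      obtain ⟨c, rfl⟩ := exists_fin_add_one_eq hj (Nat.le_of_succ_le hji)
      exact h i hi (b := ⟨c + 1, hji⟩) c.val.lt_succ_self
  · constructor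
    · exact fun h i hi => mem_interlacingRows.2 fun j => h i _ (by simp) (by simp) hi
    · intro h i j hj hji hi
      obtain ⟨c, rfl⟩ := exists_fin_add_one_eq hj hji
      exact mem_interlacingRows.1 (h i hi) c

theorem mem_MTset_iff {n : ℕ} {k : Fin n → ℤ} {a : ℕ → ℕ → ℤ} :
    a ∈ MTset n k ↔ IsMT n a ∧ row a n = k :=
  and_congr_right fun _ => bottomRow_iff_row_eq

section MTRecursion

variable {n : ℕ} {k : Fin (n + 1) → ℤ} {a : ℕ → ℕ → ℤ}

theorem IsMT.addRow (ha : IsMT n a) (hk : StrictMono k) (hrow : row a n ∈ interlacingRows k) :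
    IsMT (n + 1) (addRow k a) := by
  obtain ⟨htri, hmono, hinter⟩ := isMT_iff.1 ha
  refine isMT_iff.2 ⟨htri.addRow k, fun i hi => ?_, fun i hi => ?_⟩
  · rcases Nat.le_succ_iff.1 hi with hi | rfl
    · exact row_addRow_of_le k a hi ▸ hmono i hi
    · rwa [row_addRow]
  · rw [row_addRow_of_le k a (Nat.le_of_lt_succ hi)]
    rcases Nat.lt_succ_iff_lt_or_eq.1 hi with hi | rfl
    · exact row_addRow_of_le k a (Nat.succ_le_of_lt hi) ▸ hinter i hi
    · rwa [row_addRow]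

theorem IsMT.dropRow (ha : IsMT (n + 1) a) : IsMT n (dropRow n a) := by
  obtain ⟨htri, hmono, hinter⟩ := isMT_iff.1 ha
  refine isMT_iff.2 ⟨htri.dropRow, fun i hi => ?_, fun i hi => ?_⟩
  · exact row_dropRow_of_le a hi ▸ hmono i (Nat.le_succ_of_le hi)
  · rw [row_dropRow_of_le a hi.le, row_dropRow_of_le a (Nat.succ_le_of_lt hi)]
    exact hinter i (Nat.lt_succ_of_lt hi)

theorem MTset_succ (hk : StrictMono k) :
    MTset (n + 1) k = ⋃ l ∈ (interlacingRows k).filter StrictMono, addRow k '' MTset n l := by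
  ext a
  simp only [Set.mem_iUnion, Finset.mem_filter, exists_prop, Set.mem_image]
  constructor
  · intro h
    obtain ⟨ha, rfl⟩ := mem_MTset_iff.1 h
    obtain ⟨htri, hmono, hinter⟩ := isMT_iff.1 ha
    exact ⟨row a n, ⟨hinter n n.lt_succ_self, hmono n n.le_succ⟩, dropRow n a,
      mem_MTset_iff.2 ⟨ha.dropRow, row_dropRow_of_le a le_rfl⟩, addRow_dropRow htri rfl⟩
  · rintro ⟨l, ⟨hl, -⟩, b, hb, rfl⟩
    obtain ⟨hbMT, rfl⟩ := mem_MTset_iff.1 hb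
    exact mem_MTset_iff.2 ⟨hbMT.addRow hk hl, row_addRow k b⟩

theorem injOn_addRow_MTset (l : Fin n → ℤ) : Set.InjOn (addRow k) (MTset n l) := by
  intro a ha b hb hab
  rw [← dropRow_addRow k ha.1.1, hab, dropRow_addRow k hb.1.1]

theorem pairwiseDisjoint_addRow_MTset (t : Set (Fin n → ℤ)) :
    t.PairwiseDisjoint fun l => addRow k '' MTset n l := by
  intro l _ l' _ hne
  refine Set.disjoint_left.2 ?_
  rintro _ ⟨a, ha, rfl⟩ ⟨b, hb, hba⟩
  refine hne ?_
  rw [← (mem_MTset_iff.1 ha).2, ← (mem_MTset_iff.1 hb).2, ← row_addRow_of_le k a le_rfl, ← hba,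
    row_addRow_of_le k b le_rfl]

end MTRecursion

theorem MTset_zero (k : Fin 0 → ℤ) : MTset 0 k = {0} := by
  ext a
  rw [mem_MTset_iff, isMT_iff, Set.mem_singleton_iff]
  constructor
  · exact fun h => funext₂ fun i j => h.1.1 i j (by omega)
  · rintro rfl
    exact ⟨⟨fun _ _ _ => rfl, fun i hi => by
      obtain rfl := Nat.le_zero.1 hi
      exact Subsingleton.strictMono _, fun i hi => absurd hi i.not_lt_zero⟩, Subsingleton.elim _ _⟩

theorem finite_MTset {n : ℕ} {k : Fin n → ℤ} (hk : StrictMono k) : (MTset n k).Finite := by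
  induction n with
  | zero => exact MTset_zero k ▸ Set.finite_singleton _
  | succ n ih =>
    rw [MTset_succ hk]
    exact Set.Finite.biUnion (Finset.finite_toSet _) fun l hl =>
      (ih (Finset.mem_filter.1 hl).2).image _

theorem ncard_MTset_succ {n : ℕ} {k : Fin (n + 1) → ℤ} (hk : StrictMono k) :
    (MTset (n + 1) k).ncard = ∑ l ∈ (interlacingRows k).filter StrictMono, (MTset n l).ncard := by
  have hfin : ∀ l ∈ (interlacingRows k).filter StrictMono, (addRow k '' MTset n l).Finite :=
    fun l hl => (finite_MTset (Finset.mem_filter.1 hl).2).image _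
  rw [MTset_succ hk, ← finsum_mem_coe_finset]
  refine ((Finset.finite_toSet _).ncard_biUnion hfin (pairwiseDisjoint_addRow_MTset _)).trans ?_
  exact finsum_mem_congr rfl fun l _ => (injOn_addRow_MTset l).ncard_image

theorem ncard_MTset_eq_signedCount {n : ℕ} {k : Fin n → ℤ} (hk : StrictMono k) :
    ((MTset n k).ncard : ℚ) = signedCount n k := by
  induction n with
  | zero => rw [MTset_zero, Set.ncard_singleton, signedCount_zero, Nat.cast_one]
  | succ n ih =>
    rw [ncard_MTset_succ hk, signedCount_succ_of_strictMono hk, Nat.cast_sum]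
    exact Finset.sum_congr rfl fun l hl => ih (Finset.mem_filter.1 hl).2

/-- For every `n ≥ 1` and every `k ∈ ℤⁿ`,
`α(n;k) = Σ_{A ∈ 𝒯ₙ(k)} (-1)^{s(A)}`. -/
theorem alpha_eq_signed_sum_TSet (n : ℕ) (hn : 1 ≤ n)
    (α : (Fin n → ℤ) → ℚ) (hα : IsAlpha n α) (k : Fin n → ℤ) :
    α k = ∑ᶠ A ∈ TSet n k, ((-1 : ℚ)) ^ (sT n A.1 A.2) := by
  obtain ⟨⟨P, -, hP⟩, hcount⟩ := hα
  obtain ⟨Q, hQ⟩ := mem_polyFun_iff.1 (signedCount_mem_polyFun n)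
  have hPQ : P = Q := eq_of_eval_eq_of_strictMono fun k hk => by
    have hk' : StrictMono fun i => (k i : ℤ) := Nat.strictMono_cast.comp hk
    simpa only [hP, hQ, Int.cast_natCast] using
      (hcount _ hk').trans (ncard_MTset_eq_signedCount hk')
  rw [← signedCount, hP, hQ, hPQ]
end

section
/- For every n ≥ 1 and every (k_1,…,k_n) ∈ ℤ^n: the set of triangular arrays underlying those elements of 𝒯_n(k_1,…,k_n) that satisfy the condition 'a_{i,j−1} ≤ a_{i,j} ≤ a_{i,j+1} implies a_{i−1,j−1} < a_{i−1,j}' is exactly 𝒢_n(k_1,…,k_n); in each such element the special entries are exactly the entries a_{i,j} with a_{i−1,j−1} = a_{i,j} = a_{i−1,j}, the inversions are exactly the newcomers, the special entries correspond exactly to the sign-changing pairs, and hence s(A) = sc(A) for each such A. -/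
/-!
In a strict descent `a (i + 1) (j + 1) < a (i + 1) j`, the entry `a i j` above either is a newcomer
or repeats one end of the descent. In an element of `𝒯ₙ` a repeated end must be a special entry; in
a generalized monotone triangle, condition (3) says that a repeated end equals both its parents.
So the two structures agree as soon as "special" means "equal to both parents".

This is where the extra condition enters. If an entry equals both its parents and is not special,
neither pair it forms with a neighbour in its row can be a descent, so the extra condition forces
its equal parents to increase strictly. Conversely, the same condition forbids three equal entries
in a row of a generalized monotone triangle, so two entries equal to both parents are never
adjacent.
-/

/-- The positions of the entries of a triangular array that equal both their parents. For arrays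
satisfying `StrictCond`, this is the only possible set of special entries. -/
def equalParentsF (n : ℕ) (a : ℕ → ℕ → ℤ) : Finset (ℕ × ℕ) :=
  ((Finset.range (n + 1)) ×ˢ (Finset.range (n + 1))).filter (fun p =>
    1 < p.2 ∧ p.2 < p.1 ∧ p.1 ≤ n ∧
    a (p.1 - 1) (p.2 - 1) = a p.1 p.2 ∧ a (p.1 - 1) p.2 = a p.1 p.2)

section

variable {n : ℕ} {a : ℕ → ℕ → ℤ} {S : Finset (ℕ × ℕ)} {i j : ℕ} {p : ℕ × ℕ}

theorem mem_equalParentsF :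
    p ∈ equalParentsF n a ↔ 1 < p.2 ∧ p.2 < p.1 ∧ p.1 ≤ n ∧
      a (p.1 - 1) (p.2 - 1) = a p.1 p.2 ∧ a (p.1 - 1) p.2 = a p.1 p.2 := by
  simp only [equalParentsF, Finset.mem_filter, Finset.mem_product, Finset.mem_range]
  omega

theorem mem_equalParentsF_succ :
    (i + 1, j + 1) ∈ equalParentsF n a ↔ 1 ≤ j ∧ j + 1 ≤ i ∧ i + 1 ≤ n ∧
      a i j = a (i + 1) (j + 1) ∧ a i (j + 1) = a (i + 1) (j + 1) := by
  simp only [mem_equalParentsF, Nat.add_sub_cancel]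
  omega

theorem mem_scPairsF :
    p ∈ scPairsF n a ↔ 1 ≤ p.2 ∧ p.2 + 1 ≤ p.1 ∧ p.1 + 1 ≤ n ∧
      a p.1 p.2 = a p.1 (p.2 + 1) ∧ a (p.1 + 1) (p.2 + 1) = a p.1 p.2 := by
  simp only [scPairsF, Finset.mem_filter, Finset.mem_product, Finset.mem_range]
  omega

theorem succ_succ_mem_equalParentsF_iff :
    (i + 1, j + 1) ∈ equalParentsF n a ↔ (i, j) ∈ scPairsF n a := by
  simp only [mem_equalParentsF_succ, mem_scPairsF]
  omega

theorem equalParentsF_eq_image_scPairsF (n : ℕ) (a : ℕ → ℕ → ℤ) :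
    equalParentsF n a = (scPairsF n a).image (fun p => (p.1 + 1, p.2 + 1)) := by
  ext ⟨i, j⟩
  rw [Finset.mem_image]
  constructor
  · intro hij
    have hpos := mem_equalParentsF.1 hij
    obtain _ | i := i
    · omega
    obtain _ | j := j
    · omega
    exact ⟨(i, j), succ_succ_mem_equalParentsF_iff.1 hij, rfl⟩
  · rintro ⟨p, hp, hpij⟩
    exact hpij ▸ succ_succ_mem_equalParentsF_iff.2 hp

theorem card_equalParentsF (n : ℕ) (a : ℕ → ℕ → ℤ) :
    (equalParentsF n a).card = (scPairsF n a).card := by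
  rw [equalParentsF_eq_image_scPairsF]
  exact Finset.card_image_of_injective _ ((add_left_injective 1).prodMap (add_left_injective 1))

theorem strictCond_iff_succ :
    StrictCond n a ↔ ∀ i j, 1 ≤ j → j + 1 ≤ i → i + 1 ≤ n →
      a (i + 1) j ≤ a (i + 1) (j + 1) → a (i + 1) (j + 1) ≤ a (i + 1) (j + 2) →
      a i j < a i (j + 1) := by
  constructor
  · intro h i j hj hji hin
    exact h (i + 1) (j + 1) (by omega) (by omega) hin
  · intro h i j hj hji hin
    obtain _ | i := i
    · omega
    obtain _ | j := j
    · omega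
    exact h i j (by omega) (by omega) hin

namespace SpecOK

theorem left_parent_eq (h : SpecOK n a S) (hS : (i + 1, j + 1) ∈ S) :
    a i j = a (i + 1) (j + 1) :=
  (h.2.2.1 _ hS).1

theorem right_parent_eq (h : SpecOK n a S) (hS : (i + 1, j) ∈ S) :
    a i j = a (i + 1) j :=
  (h.2.2.1 _ hS).2

theorem subset_equalParentsF (h : SpecOK n a S) : S ⊆ equalParentsF n a := fun p hp =>
  have ⟨hj, hji, hin⟩ := h.1 p hp
  mem_equalParentsF.2 ⟨hj, hji, hin, h.2.2.1 p hp⟩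

theorem mem_uIcc (h : SpecOK n a S) (hj : 1 ≤ j) (hji : j ≤ i) (hin : i + 1 ≤ n) :
    a i j ∈ Set.uIcc (a (i + 1) j) (a (i + 1) (j + 1)) := by
  by_cases hl : (i + 1, j) ∈ S
  · exact h.right_parent_eq hl ▸ Set.left_mem_uIcc
  by_cases hr : (i + 1, j + 1) ∈ S
  · exact h.left_parent_eq hr ▸ Set.right_mem_uIcc
  obtain ⟨hweak, hstrict⟩ := h.2.2.2 i j hj hji hin hl hr
  rcases le_or_gt (a (i + 1) j) (a (i + 1) (j + 1)) with hle | hlt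
  · exact Set.mem_uIcc_of_le (hweak hle).1 (hweak hle).2
  · exact Set.mem_uIcc_of_ge (hstrict hlt).1.le (hstrict hlt).2.le

theorem mem_of_descent_of_eq_left (h : SpecOK n a S) (hj : 1 ≤ j) (hji : j ≤ i) (hin : i + 1 ≤ n)
    (hlt : a (i + 1) (j + 1) < a (i + 1) j) (heq : a i j = a (i + 1) j) : (i + 1, j) ∈ S := by
  by_contra hl
  have hr : (i + 1, j + 1) ∉ S := fun hr => hlt.ne' (heq.symm.trans (h.left_parent_eq hr))
  exact ((h.2.2.2 i j hj hji hin hl hr).2 hlt).2.ne heq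

theorem mem_of_descent_of_eq_right (h : SpecOK n a S) (hj : 1 ≤ j) (hji : j ≤ i) (hin : i + 1 ≤ n)
    (hlt : a (i + 1) (j + 1) < a (i + 1) j) (heq : a i j = a (i + 1) (j + 1)) :
    (i + 1, j + 1) ∈ S := by
  by_contra hr
  have hl : (i + 1, j) ∉ S := fun hl => hlt.ne (heq.symm.trans (h.right_parent_eq hl))
  exact ((h.2.2.2 i j hj hji hin hl hr).2 hlt).1.ne' heq

theorem eq_equalParentsF (h : SpecOK n a S) (hs : StrictCond n a) : S = equalParentsF n a := by
  refine h.subset_equalParentsF.antisymm ?_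
  rw [equalParentsF_eq_image_scPairsF, Finset.image_subset_iff]
  rintro ⟨i, j⟩ hp
  obtain ⟨hj, hji, hin, hleft, hright⟩ :=
    mem_equalParentsF_succ.1 (succ_succ_mem_equalParentsF_iff.2 hp)
  by_contra hS
  have hle : a (i + 1) j ≤ a (i + 1) (j + 1) :=
    not_lt.1 fun hlt => hS (h.mem_of_descent_of_eq_right hj (by omega) hin hlt hleft)
  have hle' : a (i + 1) (j + 1) ≤ a (i + 1) (j + 2) :=
    not_lt.1 fun hlt => hS (h.mem_of_descent_of_eq_left (by omega) hji hin hlt hright)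
  exact (strictCond_iff_succ.1 hs i j hj hji hin hle hle').ne (hleft.trans hright.symm)

theorem invF_eq_newcomersF (h : SpecOK n a S) : invF n a S = newcomersF n a := by
  refine Finset.filter_congr ?_
  rintro ⟨i, j⟩ -
  constructor
  · rintro ⟨hj, hji, hin, hl, hr, hlt⟩
    exact ⟨hj, hji, hin, ((h.2.2.2 i j hj hji hin hl hr).2 hlt).symm⟩
  · rintro ⟨hj, hji, hin, hlt, hgt⟩
    exact ⟨hj, hji, hin, fun hl => hlt.ne (h.right_parent_eq hl),
      fun hr => hgt.ne' (h.left_parent_eq hr), hgt.trans hlt⟩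

theorem sT_eq_scT (h : SpecOK n a S) (hs : StrictCond n a) : sT n a S = scT n a := by
  rw [sT, scT, h.invF_eq_newcomersF, h.eq_equalParentsF hs, card_equalParentsF, add_comm]

end SpecOK

theorem IsTArr.isGMT (h : IsTArr n a S) (hs : StrictCond n a) : IsGMT n a := by
  obtain ⟨htri, hspec⟩ := h
  refine ⟨htri, fun i j => hspec.mem_uIcc, strictCond_iff_succ.1 hs,
    fun i j hj hji hin => ⟨fun heq hlt => ?_, fun hlt heq => ?_⟩⟩
  · have hS := hspec.mem_of_descent_of_eq_left hj hji hin hlt heq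
    exact ⟨(hspec.1 _ hS).1, (hspec.2.2.1 _ hS).1.trans heq.symm⟩
  · have hS := hspec.mem_of_descent_of_eq_right hj hji hin hlt heq.symm
    exact ⟨Nat.lt_of_succ_lt_succ (hspec.1 _ hS).2.1, (hspec.right_parent_eq hS).trans heq⟩

namespace IsGMT

theorem mem_uIcc (h : IsGMT n a) (hj : 1 ≤ j) (hji : j ≤ i) (hin : i + 1 ≤ n) :
    a i j ∈ Set.uIcc (a (i + 1) j) (a (i + 1) (j + 1)) :=
  h.2.1 i j hj hji hin

theorem strictCond (h : IsGMT n a) : StrictCond n a :=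
  strictCond_iff_succ.2 h.2.2.1

theorem not_three_consecutive_eq (h : IsGMT n a) (hj : 1 ≤ j) (hji : j + 2 ≤ i) (hin : i ≤ n) :
    ¬ (a i j = a i (j + 1) ∧ a i (j + 1) = a i (j + 2)) := by
  rintro ⟨heq, heq'⟩
  obtain _ | i := i
  · omega
  have hlt : a i j < a i (j + 1) := h.2.2.1 i j hj (by omega) hin heq.le heq'.le
  have hleft : a i j = a (i + 1) (j + 1) := by
    simpa [heq] using h.mem_uIcc hj (by omega) hin
  have hright : a i (j + 1) = a (i + 1) (j + 1) := by
    simpa [← heq'] using h.mem_uIcc (Nat.le_add_left 1 j) (by omega) hin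
  exact hlt.ne (hleft.trans hright.symm)

theorem notMem_equalParentsF_of_mem (h : IsGMT n a) (hij : (i, j) ∈ equalParentsF n a) :
    (i, j + 1) ∉ equalParentsF n a := by
  intro hij'
  have hpos := mem_equalParentsF.1 hij
  obtain _ | i := i
  · omega
  obtain _ | j := j
  · omega
  obtain ⟨hj, -, hin, hleft, hright⟩ := mem_equalParentsF_succ.1 hij
  obtain ⟨-, hji, -, hleft', hright'⟩ := mem_equalParentsF_succ.1 hij'
  exact h.not_three_consecutive_eq hj hji (Nat.le_of_succ_le hin)
    ⟨hleft.trans hright.symm, hleft'.trans hright'.symm⟩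

theorem mem_equalParentsF_of_descent_of_eq_left (h : IsGMT n a) (hj : 1 ≤ j) (hji : j ≤ i)
    (hin : i + 1 ≤ n) (hlt : a (i + 1) (j + 1) < a (i + 1) j) (heq : a i j = a (i + 1) j) :
    (i + 1, j) ∈ equalParentsF n a := by
  obtain ⟨hj', heq'⟩ := (h.2.2.2 i j hj hji hin).1 heq hlt
  exact mem_equalParentsF.2 ⟨hj', Nat.lt_succ_of_le hji, hin, heq'.trans heq, heq⟩

theorem mem_equalParentsF_of_descent_of_eq_right (h : IsGMT n a) (hj : 1 ≤ j) (hji : j ≤ i)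
    (hin : i + 1 ≤ n) (hlt : a (i + 1) (j + 1) < a (i + 1) j) (heq : a i j = a (i + 1) (j + 1)) :
    (i + 1, j + 1) ∈ equalParentsF n a := by
  obtain ⟨hji', heq'⟩ := (h.2.2.2 i j hj hji hin).2 hlt heq.symm
  exact mem_equalParentsF_succ.2 ⟨hj, hji', hin, heq, heq'.trans heq⟩

theorem isTArr_equalParentsF (h : IsGMT n a) : IsTArr n a (equalParentsF n a) := by
  refine ⟨h.1, fun p hp => ?_, ?_, fun p hp => (mem_equalParentsF.1 hp).2.2.2,
    fun i j hj hji hin hl hr => ⟨fun hle => ?_, fun hlt => ?_⟩⟩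
  · obtain ⟨hj, hji, hin, -⟩ := mem_equalParentsF.1 hp
    exact ⟨hj, hji, hin⟩
  · rintro ⟨i, j⟩ hp ⟨_, _⟩ hq rfl rfl
    exact h.notMem_equalParentsF_of_mem hp hq
  · simpa [Set.uIcc_of_le hle] using h.mem_uIcc hj hji hin
  · obtain ⟨hge, hle⟩ : a i j ∈ Set.Icc (a (i + 1) (j + 1)) (a (i + 1) j) :=
      Set.uIcc_of_ge hlt.le ▸ h.mem_uIcc hj hji hin
    constructor
    · exact hge.lt_of_ne' fun heq =>
        hr (h.mem_equalParentsF_of_descent_of_eq_right hj hji hin hlt heq)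
    · exact hle.lt_of_ne fun heq =>
        hl (h.mem_equalParentsF_of_descent_of_eq_left hj hji hin hlt heq)

end IsGMT

theorem isGMT_iff_exists_isTArr : IsGMT n a ↔ ∃ S, IsTArr n a S ∧ StrictCond n a :=
  ⟨fun h => ⟨_, h.isTArr_equalParentsF, h.strictCond⟩, fun ⟨_, h, hs⟩ => h.isGMT hs⟩

end

/-- The arrays underlying elements of `𝒯ₙ(k)` satisfying the extra condition
`a_{i,j-1} ≤ a_{i,j} ≤ a_{i,j+1} → a_{i-1,j-1} < a_{i-1,j}` are exactly the
Generalized Monotone Triangles with bottom row `k`; in each such element the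
special entries are exactly the entries equal to both parents, the inversions
are exactly the newcomers, the special entries correspond exactly to the
sign-changing pairs, and `s(A) = sc(A)`. -/
theorem TSet_strict_eq_GMT (n : ℕ) (hn : 1 ≤ n) (k : Fin n → ℤ) :
    ({a | ∃ S, (a, S) ∈ TSet n k ∧ StrictCond n a} = GMTset n k) ∧
    (∀ a S, (a, S) ∈ TSet n k → StrictCond n a →
      (S = ((Finset.range (n + 1)) ×ˢ (Finset.range (n + 1))).filter (fun p =>
            1 < p.2 ∧ p.2 < p.1 ∧ p.1 ≤ n ∧
            a (p.1 - 1) (p.2 - 1) = a p.1 p.2 ∧ a (p.1 - 1) p.2 = a p.1 p.2)) ∧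
      invF n a S = newcomersF n a ∧
      S = (scPairsF n a).image (fun p => (p.1 + 1, p.2 + 1)) ∧
      sT n a S = scT n a) := by
  refine ⟨Set.ext fun a => ?_, fun a S hA hs => ?_⟩
  · simp only [GMTset, TSet, Set.mem_ofPred_eq, isGMT_iff_exists_isTArr, and_right_comm,
      exists_and_right]
  · have hspec : SpecOK n a S := hA.1.2
    have hS : S = equalParentsF n a := hspec.eq_equalParentsF hs
    exact ⟨hS, hspec.invF_eq_newcomersF, hS.trans (equalParentsF_eq_image_scPairsF n a),
      hspec.sT_eq_scT hs⟩
end
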